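/- arXiv:1103.0247 — 6 statements merged into one kernel-verified Lean document; each statement's English description precedes it below -/
import Mathlib

section
/- Let Γ be an infinite set. Then the Baire σ-algebra Ba(C_p(2^Γ)) coincides with the norm-Borel σ-algebra Bo(C(2^Γ)) if and only if the cardinal |Γ| is a Kunen cardinal. -/
/-- The σ-algebra on `Γ × Γ` generated by all rectangles `A ×ˢ B` with `A, B ⊆ Γ`
(the product σ-algebra of two copies of the power-set σ-algebra). -/
def productSigma (Γ : Type*) : MeasurableSpace (Γ × Γ) :=
  MeasurableSpace.generateFrom {S : Set (Γ × Γ) | ∃ A B : Set Γ, S = A ×ˢ B}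

/-- `|Γ|` is a Kunen cardinal: the product σ-algebra on `Γ × Γ` is the full power set. -/
def IsKunen (Γ : Type*) : Prop := productSigma Γ = ⊤

/-- The Baire σ-algebra of the pointwise convergence topology on `C(K, ℝ)`:
the σ-algebra generated by the evaluation maps `f ↦ f t`, `t ∈ K`. -/
def BaCp (K : Type*) [TopologicalSpace K] : MeasurableSpace C(K, ℝ) :=
  ⨆ t : K, MeasurableSpace.comap (fun f : C(K, ℝ) => f t) Real.measurableSpace

namespace KunenAux

open Set Topology

section
variable {Γ : Type*}

/-! ### Borel = Baire implies Kunen -/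

theorem eval_meas (t : Γ → Bool) :
    @Measurable _ _ (BaCp (Γ → Bool)) _ (fun f : C(Γ → Bool, ℝ) => f t) := by
  rw [measurable_iff_comap_le]
  exact le_iSup (fun t : Γ → Bool =>
    MeasurableSpace.comap (fun f : C(Γ → Bool, ℝ) => f t) Real.measurableSpace) t

theorem ba_le : BaCp (Γ → Bool) ≤ borel C(Γ → Bool, ℝ) := by
  refine iSup_le fun t => ?_
  rw [← measurable_iff_comap_le]
  borelize C(Γ → Bool, ℝ)
  exact (continuous_eval_const (F := C(Γ → Bool, ℝ)) t).measurable

/-- `x_α + 2 x_β`. -/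
def phi (p : Γ × Γ) : C(Γ → Bool, ℝ) where
  toFun t := (if t p.1 then (1 : ℝ) else 0) + 2 * (if t p.2 then (1 : ℝ) else 0)
  continuous_toFun := by
    have h : Continuous (fun b : Bool => if b then (1 : ℝ) else 0) := continuous_of_discreteTopology
    exact (h.comp (continuous_apply p.1)).add
      (continuous_const.mul (h.comp (continuous_apply p.2)))

theorem phi_sep (p q : Γ × Γ) (h : dist (phi p) (phi q) < 1) : p = q := by
  classical
  have key : ∀ t : Γ → Bool, t p.1 = t q.1 ∧ t p.2 = t q.2 := by
    intro t
    have := (ContinuousMap.dist_apply_le_dist (f := phi p) (g := phi q) t).trans_lt h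
    rw [Real.dist_eq, abs_lt] at this
    simp only [phi, ContinuousMap.coe_mk] at this
    cases h1 : t p.1 <;> cases h2 : t p.2 <;> cases h3 : t q.1 <;> cases h4 : t q.2 <;>
      simp [h1, h2, h3, h4] at this ⊢ <;> norm_num at this
  have h1 := (key (fun γ => decide (γ = q.1))).1
  have h2 := (key (fun γ => decide (γ = q.2))).2
  simp at h1 h2
  exact Prod.ext h1 h2

theorem phi_meas : @Measurable _ _ (productSigma Γ) (BaCp (Γ → Bool)) (phi (Γ := Γ)) := by
  letI := productSigma Γ
  rw [measurable_iff_comap_le, BaCp, MeasurableSpace.comap_iSup]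
  refine iSup_le fun t => ?_
  rw [MeasurableSpace.comap_comp, ← measurable_iff_comap_le]
  have h1 : MeasurableSet {p : Γ × Γ | t p.1 = true} :=
    MeasurableSpace.measurableSet_generateFrom ⟨{γ | t γ = true}, univ, by ext; simp⟩
  have h2 : MeasurableSet {p : Γ × Γ | t p.2 = true} :=
    MeasurableSpace.measurableSet_generateFrom ⟨univ, {γ | t γ = true}, by ext; simp⟩
  exact (Measurable.ite h1 measurable_const measurable_const).add
    (measurable_const.mul (Measurable.ite h2 measurable_const measurable_const))

theorem kunen_of_eq (h : BaCp (Γ → Bool) = borel C(Γ → Bool, ℝ)) : IsKunen Γ := by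
  refine top_unique fun S _ => ?_
  have hinj : Function.Injective (phi (Γ := Γ)) := fun p q hpq =>
    phi_sep p q (by rw [hpq, dist_self]; exact one_pos)
  have hcl : IsClosed (phi '' S) := by
    apply Metric.isClosed_of_pairwise_le_dist (ε := 1) one_pos
    rintro _ ⟨p, -, rfl⟩ _ ⟨q, -, rfl⟩ hne
    by_contra hlt
    exact hne (by rw [phi_sep p q (not_le.1 hlt)])
  have hm : @MeasurableSet _ (BaCp (Γ → Bool)) (phi '' S) := by
    rw [h]
    borelize C(Γ → Bool, ℝ)
    exact hcl.measurableSet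
  have := phi_meas hm
  rwa [preimage_image_eq _ hinj] at this

/-! ### Kunen cardinals are at most continuum -/

theorem exists_family {S : Set (Γ × Γ)} (hS : @MeasurableSet _ (productSigma Γ) S) :
    ∃ A : ℕ → Set Γ, ∀ γ γ', (∀ n, γ ∈ A n ↔ γ' ∈ A n) → ∀ y, (γ, y) ∈ S ↔ (γ', y) ∈ S := by
  induction S, hS using MeasurableSpace.generateFrom_induction with
  | hC t ht =>
    obtain ⟨A, B, rfl⟩ := ht
    exact ⟨fun _ => A, fun γ γ' h y => by simp [h 0]⟩
  | empty => exact ⟨fun _ => ∅, by simp⟩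
  | compl t ht ih =>
    obtain ⟨A, hA⟩ := ih
    exact ⟨A, fun γ γ' h y => not_congr (hA γ γ' h y)⟩
  | iUnion s hs ih =>
    choose A hA using ih
    refine ⟨fun n => A n.unpair.1 n.unpair.2, fun γ γ' h y => ?_⟩
    simp only [mem_iUnion]
    refine exists_congr fun i => hA i γ γ' (fun n => ?_) y
    simpa using h (Nat.pair i n)

theorem exists_q (hK : IsKunen Γ) :
    ∃ q : ℕ → Γ → ℕ, ∀ F : Finset Γ, ∃ n, Set.InjOn (q n) F := by
  classical
  obtain ⟨A, hA⟩ := exists_family (Γ := Γ) (S := {p | p.1 = p.2}) (by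
    rw [show productSigma Γ = ⊤ from hK]; trivial)
  have hsep : ∀ γ γ' : Γ, γ ≠ γ' → ∃ n, ¬ (γ ∈ A n ↔ γ' ∈ A n) := by
    intro γ γ' hne
    by_contra hcon
    push Not at hcon
    have := hA γ γ' hcon γ
    simp at this
    exact hne this.symm
  let q : ℕ → Γ → ℕ := fun n γ =>
    Encodable.encode ((List.range n).map fun i => decide (γ ∈ A i))
  have hq : ∀ n γ γ', q n γ = q n γ' → ∀ i < n, (γ ∈ A i ↔ γ' ∈ A i) := by
    intro n γ γ' h i hi
    have h' := Encodable.encode_injective h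
    rw [List.map_inj_left] at h'
    simpa using h' i (List.mem_range.2 hi)
  refine ⟨q, fun F => ?_⟩
  choose! N hN using hsep
  refine ⟨(F ×ˢ F).sup (fun p => N p.1 p.2) + 1, fun γ hγ γ' hγ' h => ?_⟩
  by_contra hne
  refine hN γ γ' hne (hq _ _ _ h _ (Nat.lt_succ_of_le ?_))
  exact Finset.le_sup (f := fun p : Γ × Γ => N p.1 p.2) (b := (γ, γ'))
    (Finset.mem_product.2 ⟨hγ, hγ'⟩)

theorem pair_meas (hK : IsKunen Γ) {X Y : Type*} [MeasurableSpace X] (φ : Y ≃ Γ)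
    (a : X → Γ) (b : X → Y) (ha : ∀ S, MeasurableSet (a ⁻¹' S)) (hb : ∀ S, MeasurableSet (b ⁻¹' S))
    (S : Set (Γ × Y)) : MeasurableSet ((fun x => (a x, b x)) ⁻¹' S) := by
  have h : @Measurable _ _ _ (productSigma Γ) (fun x => (a x, φ (b x))) := by
    apply measurable_generateFrom
    rintro _ ⟨A, B, rfl⟩
    exact (ha A).inter (hb (φ ⁻¹' B))
  have h2 : @MeasurableSet _ (productSigma Γ) {p : Γ × Γ | (p.1, φ.symm p.2) ∈ S} := by
    rw [show productSigma Γ = ⊤ from hK]; trivial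
  have := h h2
  convert this using 1
  ext x; simp

theorem list_meas [Infinite Γ] (hK : IsKunen Γ) {X ι : Type*} [MeasurableSpace X]
    (e : ι → X → Γ) (he : ∀ j S, MeasurableSet (e j ⁻¹' S)) (J : List ι) (S : Set (List Γ)) :
    MeasurableSet ((fun x => J.map (fun j => e j x)) ⁻¹' S) := by
  obtain ⟨φ⟩ : Nonempty (List Γ ≃ Γ) := Cardinal.eq.1 (Cardinal.mk_list_eq_mk Γ)
  induction J generalizing S with
  | nil => exact MeasurableSet.const (([] : List Γ) ∈ S)
  | cons j J ih =>
    exact pair_meas hK φ (e j) _ (he j) ih {p | p.1 :: p.2 ∈ S}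

/-! ### separability -/

theorem separable (q : ℕ → Γ → ℕ) (hq : ∀ F : Finset Γ, ∃ n, Set.InjOn (q n) F) :
    TopologicalSpace.SeparableSpace (Γ → Bool) := by
  classical
  refine ⟨range (fun p : ℕ × Finset ℕ => fun γ => decide (q p.1 γ ∈ p.2)), countable_range _, ?_⟩
  intro x
  rw [mem_closure_iff_nhds]
  intro U hU
  rw [nhds_pi, Filter.mem_pi] at hU
  obtain ⟨I, hI, t, ht, hsub⟩ := hU
  obtain ⟨n, hn⟩ := hq hI.toFinset
  refine ⟨_, hsub ?_, ⟨(n, (hI.toFinset.filter (fun γ => x γ = true)).image (q n)), rfl⟩⟩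
  intro γ hγ
  have : decide (q n γ ∈ (hI.toFinset.filter (fun γ => x γ = true)).image (q n)) = x γ := by
    rw [Bool.eq_iff_iff, decide_eq_true_iff, Finset.mem_image]
    constructor
    · rintro ⟨γ', h1, h2⟩
      rw [Finset.mem_filter] at h1
      rw [← hn h1.1 (by simpa using hγ) h2]
      exact h1.2
    · intro h
      exact ⟨γ, by simp [h, hγ], rfl⟩
  simp only [this]
  exact mem_of_mem_nhds (ht γ)

/-! ### the oscillation -/

open Classical in
/-- oscillation of `f` along the coordinates in `A` is at most `r`. -/
def small (A : Set Γ) (r : ℝ) (f : C(Γ → Bool, ℝ)) : Prop :=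
  ∀ x y : Γ → Bool, |f x - f (A.piecewise y x)| ≤ r

theorem small_iff {A : Set Γ} {r : ℝ} {f : C(Γ → Bool, ℝ)} :
    small A r f ↔ ∀ x y : Γ → Bool, (∀ γ, γ ∉ A → x γ = y γ) → |f x - f y| ≤ r := by
  classical
  constructor
  · intro h x y hxy
    convert h x y using 4
    ext γ
    by_cases hγ : γ ∈ A <;> simp [hγ, hxy]
  · intro h x y
    refine h _ _ fun γ hγ => ?_
    simp [hγ]

theorem small.mono {A B : Set Γ} {r s : ℝ} {f : C(Γ → Bool, ℝ)} (h : small B s f) (hAB : A ⊆ B)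
    (hrs : s ≤ r) : small A r f := by
  rw [small_iff] at *
  exact fun x y hxy => (h x y fun γ hγ => hxy γ fun h' => hγ (hAB h')).trans hrs

theorem small.union {A B : Set Γ} {r s : ℝ} {f : C(Γ → Bool, ℝ)} (hA : small A r f)
    (hB : small B s f) : small (A ∪ B) (r + s) f := by
  classical
  rw [small_iff] at *
  intro x y hxy
  have h1 := hA x (A.piecewise y x) (fun γ hγ => by simp [hγ])
  have h2 := hB (A.piecewise y x) y (fun γ hγ => by
    by_cases h : γ ∈ A
    · simp [h]
    · simpa [h] using hxy γ (by simp [h, hγ]))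
  calc |f x - f y| ≤ _ := abs_sub_le _ (f (A.piecewise y x)) _
    _ ≤ _ := add_le_add h1 h2

theorem exists_finset (f : C(Γ → Bool, ℝ)) {ε : ℝ} (hε : 0 < ε) :
    ∃ F : Finset Γ, small (F : Set Γ)ᶜ ε f := by
  classical
  have hloc : ∀ x : Γ → Bool, ∃ I : Finset Γ, ∀ y, (∀ γ ∈ I, y γ = x γ) → |f y - f x| < ε / 2 := by
    intro x
    have hU : f ⁻¹' Metric.ball (f x) (ε / 2) ∈ 𝓝 x :=
      f.continuous.continuousAt (Metric.ball_mem_nhds _ (half_pos hε))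
    rw [nhds_pi, Filter.mem_pi] at hU
    obtain ⟨I, hI, t, ht, hsub⟩ := hU
    refine ⟨hI.toFinset, fun y hy => ?_⟩
    have : y ∈ I.pi t := fun γ hγ => by
      rw [hy γ (by simpa using hγ)]; exact mem_of_mem_nhds (ht γ)
    simpa [Real.dist_eq] using hsub this
  choose I hI using hloc
  obtain ⟨T, -, hT⟩ := (isCompact_univ (X := Γ → Bool)).elim_nhds_subcover
    (fun x => {y | ∀ γ ∈ I x, y γ = x γ}) (fun x _ => by
      have : {y : Γ → Bool | ∀ γ ∈ I x, y γ = x γ} = (I x : Set Γ).pi (fun γ => {x γ}) := by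
        ext; simp [Set.pi]
      rw [this]
      exact set_pi_mem_nhds (Finset.finite_toSet _) fun γ _ => by simp)
  refine ⟨T.biUnion I, small_iff.2 fun x y hxy => ?_⟩
  have hx := hT (mem_univ x)
  simp only [mem_iUnion] at hx
  obtain ⟨z, hz, hxz⟩ := hx
  have h1 := hI z x hxz
  have h2 := hI z y (fun γ hγ => by
    rw [← hxz γ hγ]
    refine (hxy γ ?_).symm
    simpa using ⟨z, hz, hγ⟩)
  rw [abs_lt] at h1 h2
  rw [abs_le]
  constructor <;> linarith

theorem small_meas [TopologicalSpace.SeparableSpace (Γ → Bool)]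
    [m : MeasurableSpace C(Γ → Bool, ℝ)] (hm : ∀ t, Measurable fun f : C(Γ → Bool, ℝ) => f t)
    (A : Set Γ) (r : ℝ) : MeasurableSet {f : C(Γ → Bool, ℝ) | small A r f} := by
  classical
  have : {f : C(Γ → Bool, ℝ) | small A r f} =
      ⋂ n, {f | |f (TopologicalSpace.denseSeq ((Γ → Bool) × (Γ → Bool)) n).1 -
        f (A.piecewise (TopologicalSpace.denseSeq ((Γ → Bool) × (Γ → Bool)) n).2
          (TopologicalSpace.denseSeq ((Γ → Bool) × (Γ → Bool)) n).1)| ≤ r} := by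
    ext f
    simp only [mem_ofPred_eq, mem_iInter]
    constructor
    · intro h n
      convert h _ _
    · intro h x y
      have hcl : IsClosed {p : (Γ → Bool) × (Γ → Bool) | |f p.1 - f (A.piecewise p.2 p.1)| ≤ r} := by
        refine isClosed_le ?_ continuous_const
        have : Continuous fun p : (Γ → Bool) × (Γ → Bool) => A.piecewise p.2 p.1 := by
          refine continuous_pi fun γ => ?_
          by_cases hγ : γ ∈ A
          · simp only [piecewise_eq_of_mem _ _ _ hγ]; fun_prop
          · simp only [piecewise_eq_of_notMem _ _ _ hγ]; fun_prop
        exact ((f.continuous.comp continuous_fst).sub (f.continuous.comp this)).abs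
      have hd := (TopologicalSpace.denseRange_denseSeq ((Γ → Bool) × (Γ → Bool)))
      have := (hd.closure_range ▸ closure_minimal (range_subset_iff.2 h) hcl : univ ⊆ _)
        (mem_univ (x, y))
      simp only [mem_ofPred_eq] at this
      convert this
  rw [this]
  exact MeasurableSet.iInter fun n => measurableSet_le ((hm _).sub (hm _)).abs measurable_const

/-! ### selecting coordinates -/

/-- domain condition -/
def dom (q : ℕ → Γ → ℕ) (P : Set Γ) (δ : ℝ) (f : C(Γ → Bool, ℝ)) : Prop :=
  ¬ small P δ f ∧ ∀ n, ∃ i, small (P \ {γ | q n γ = i}) (δ / 4) f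

theorem dom_exists {q : ℕ → Γ → ℕ} (hq : ∀ F : Finset Γ, ∃ n, Set.InjOn (q n) F)
    {P : Set Γ} {δ : ℝ} (hδ : 0 < δ) {f : C(Γ → Bool, ℝ)} (h : dom q P δ f) :
    ∃ γ ∈ P, small (P \ {γ}) (3 * δ / 8) f := by
  obtain ⟨F, hF⟩ := exists_finset f (show 0 < δ / 8 by positivity)
  obtain ⟨n, hn⟩ := hq F
  obtain ⟨i, hi⟩ := h.2 n
  by_cases hex : ∃ γ ∈ P, γ ∈ F ∧ q n γ = i
  · obtain ⟨γ, hP, hγ, hqi⟩ := hex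
    refine ⟨γ, hP, (hi.union hF).mono ?_ (by linarith)⟩
    rintro γ' ⟨hP', hne⟩
    by_cases h' : q n γ' = i
    · right
      intro hγ'
      exact hne (hn hγ' hγ (h'.trans hqi.symm))
    · exact Or.inl ⟨hP', h'⟩
  · refine (h.1 ((hi.union hF).mono ?_ (by linarith))).elim
    intro γ hP
    by_cases h' : q n γ = i
    · right
      intro hγ
      exact hex ⟨γ, hP, hγ, h'⟩
    · exact Or.inl ⟨hP, h'⟩

open Classical in
/-- selected coordinate -/
noncomputable def sel [Nonempty Γ] (q : ℕ → Γ → ℕ) (P : Set Γ) (δ : ℝ) (f : C(Γ → Bool, ℝ)) : Γ :=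
  if h : dom q P δ f ∧ ∃ γ ∈ P, small (P \ {γ}) (3 * δ / 8) f then h.2.choose
  else Classical.arbitrary Γ

theorem sel_spec [Nonempty Γ] {q : ℕ → Γ → ℕ} (hq : ∀ F : Finset Γ, ∃ n, Set.InjOn (q n) F)
    {P : Set Γ} {δ : ℝ} (hδ : 0 < δ) {f : C(Γ → Bool, ℝ)} (h : dom q P δ f) :
    small (P \ {sel q P δ f}) (3 * δ / 8) f := by
  have h' : dom q P δ f ∧ ∃ γ ∈ P, small (P \ {γ}) (3 * δ / 8) f := ⟨h, dom_exists hq hδ h⟩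
  rw [sel, dif_pos h']
  exact h'.2.choose_spec.2

theorem sel_mem_iff [Nonempty Γ] {q : ℕ → Γ → ℕ} (hq : ∀ F : Finset Γ, ∃ n, Set.InjOn (q n) F)
    {P : Set Γ} {δ : ℝ} (hδ : 0 < δ) {f : C(Γ → Bool, ℝ)} (h : dom q P δ f) (A : Set Γ) :
    sel q P δ f ∈ A ↔ ¬ small (P ∩ A) (δ / 2) f := by
  have hs := sel_spec hq hδ h
  constructor
  · intro hA hsm
    refine h.1 ((hs.union hsm).mono ?_ (by linarith))
    intro γ hγ
    by_cases hc : γ = sel q P δ f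
    · exact Or.inr ⟨hγ, hc ▸ hA⟩
    · exact Or.inl ⟨hγ, hc⟩
  · intro hsm
    by_contra hA
    refine hsm (hs.mono ?_ (by linarith))
    rintro γ ⟨hγ, hγA⟩
    exact ⟨hγ, fun hc => hA (hc ▸ hγA)⟩

theorem sel_meas [Nonempty Γ] {q : ℕ → Γ → ℕ} (hq : ∀ F : Finset Γ, ∃ n, Set.InjOn (q n) F)
    [m : MeasurableSpace C(Γ → Bool, ℝ)] (hm : ∀ t, Measurable fun f : C(Γ → Bool, ℝ) => f t)
    (P : Set Γ) {δ : ℝ} (hδ : 0 < δ) (A : Set Γ) : MeasurableSet (sel q P δ ⁻¹' A) := by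
  haveI := separable q hq
  have hd : MeasurableSet {f : C(Γ → Bool, ℝ) | dom q P δ f} := by
    have : {f : C(Γ → Bool, ℝ) | dom q P δ f} = {f | small P δ f}ᶜ ∩
        ⋂ n, ⋃ i, {f | small (P \ {γ | q n γ = i}) (δ / 4) f} := by
      ext f; simp [dom]
    rw [this]
    exact (small_meas hm _ _).compl.inter
      (MeasurableSet.iInter fun n => MeasurableSet.iUnion fun i => small_meas hm _ _)
  have : sel q P δ ⁻¹' A = ({f | dom q P δ f} ∩ {f | small (P ∩ A) (δ / 2) f}ᶜ) ∪
      ({f | dom q P δ f}ᶜ ∩ {_f | Classical.arbitrary Γ ∈ A}) := by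
    ext f
    by_cases h : dom q P δ f
    · simp [h, sel_mem_iff hq hδ h]
    · simp [h, sel]
  rw [this]
  exact (hd.inter (small_meas hm _ _).compl).union (hd.compl.inter (MeasurableSet.const _))

theorem sel_cover [Nonempty Γ] {q : ℕ → Γ → ℕ} (hq : ∀ F : Finset Γ, ∃ n, Set.InjOn (q n) F)
    {δ : ℝ} (hδ : 0 < δ) {f : C(Γ → Bool, ℝ)} {γ : Γ} (h : ¬ small {γ} δ f) :
    ∃ n i, sel q {γ' | q n γ' = i} δ f = γ := by
  classical
  obtain ⟨F, hF⟩ := exists_finset f (show 0 < δ / 4 by positivity)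
  obtain ⟨n, hn⟩ := hq (insert γ F)
  have hsm : small ({γ' | q n γ' = q n γ} \ {γ}) (δ / 4) f := by
    refine hF.mono ?_ le_rfl
    rintro γ' ⟨h1, h2⟩ h3
    exact h2 (hn (by simp at h3; simp [h3]) (by simp) h1)
  have hdom : dom q {γ' | q n γ' = q n γ} δ f := by
    refine ⟨fun hc => h (hc.mono (by simp) le_rfl), fun k => ⟨q k γ, hsm.mono ?_ le_rfl⟩⟩
    rintro γ' ⟨h1, h2⟩
    exact ⟨h1, fun hc => h2 (by rw [mem_singleton_iff.1 hc]; rfl)⟩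
  refine ⟨n, q n γ, ?_⟩
  rw [← mem_singleton_iff, sel_mem_iff hq hδ hdom]
  intro hc
  exact h (hc.mono (by simp) (by linarith))

theorem exists_finset' (f : C(Γ → Bool, ℝ)) {ε : ℝ} (hε : 0 < ε) :
    ∃ F : Finset Γ, small (F : Set Γ)ᶜ ε f ∧ ∀ γ ∈ F, ∃ k : ℕ, ¬ small {γ} (1 / ((k : ℝ) + 1)) f := by
  classical
  obtain ⟨F, hF⟩ := exists_finset f hε
  induction F using Finset.strongInduction with
  | H F ih =>
    by_cases hall : ∀ γ ∈ F, ∃ k : ℕ, ¬ small {γ} (1 / ((k : ℝ) + 1)) f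
    · exact ⟨F, hF, hall⟩
    · push Not at hall
      obtain ⟨γ, hγ, hsm⟩ := hall
      have h0 : small {γ} 0 f := by
        rw [small_iff]
        intro x y hxy
        refine le_of_forall_pos_le_add fun η hη => ?_
        obtain ⟨k, hk⟩ := exists_nat_one_div_lt hη
        have := small_iff.1 (hsm k) x y hxy
        linarith
      refine ih (F.erase γ) (Finset.erase_ssubset hγ) ((hF.union h0).mono ?_ (by simp))
      intro γ' h'
      by_cases hc : γ' = γ
      · exact Or.inr hc
      · left
        simpa [hc] using h'

/-- simple functions -/
noncomputable def G (h : List Bool →₀ ℚ) (l : List Γ) : C(Γ → Bool, ℝ) where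
  toFun x := ((h (l.map x) : ℚ) : ℝ)
  continuous_toFun := by
    have hl : IsLocallyConstant (fun x : Γ → Bool => l.map x) := by
      rw [IsLocallyConstant.iff_exists_open]
      intro x
      refine ⟨{y | ∀ γ ∈ l, y γ = x γ}, ?_, by simp, fun y hy => List.map_congr_left hy⟩
      have : {y : Γ → Bool | ∀ γ ∈ l, y γ = x γ} = {γ | γ ∈ l}.pi (fun γ => {x γ}) := by
        ext; simp [Set.pi]
      rw [this]
      exact isOpen_set_pi (List.finite_toSet l) fun γ _ => isOpen_discrete _
    exact (hl.comp (fun b => ((h b : ℚ) : ℝ))).continuous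

theorem exists_G (f : C(Γ → Bool, ℝ)) {ε : ℝ} (hε : 0 < ε) (l : List Γ)
    (hl : small {γ | γ ∈ l}ᶜ ε f) : ∃ h : List Bool →₀ ℚ, ∀ x, |f x - G h l x| ≤ 2 * ε := by
  classical
  have hfin : {b : List Bool | b.length = l.length}.Finite := List.finite_length_eq _ _
  have hr : ∀ r : ℝ, ∃ c : ℚ, |r - c| ≤ ε := fun r => by
    obtain ⟨c, hc1, hc2⟩ := exists_rat_btwn (show r - ε < r by linarith)
    refine ⟨c, ?_⟩
    rw [abs_le]; constructor <;> linarith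
  choose R hR using hr
  let H : List Bool → ℚ := fun b => if hb : ∃ x : Γ → Bool, l.map x = b then R (f hb.choose) else 0
  refine ⟨Finsupp.onFinset hfin.toFinset H ?_, fun x => ?_⟩
  · intro b hb
    simp only [Set.Finite.mem_toFinset, mem_ofPred_eq]
    by_contra hne
    refine hb (dif_neg ?_)
    rintro ⟨x, rfl⟩
    simp at hne
  · have hb : ∃ y : Γ → Bool, l.map y = l.map x := ⟨x, rfl⟩
    have hG : G (Finsupp.onFinset hfin.toFinset H (by
        intro b hb
        simp only [Set.Finite.mem_toFinset, mem_ofPred_eq]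
        by_contra hne
        refine hb (dif_neg ?_)
        rintro ⟨x, rfl⟩
        simp at hne)) l x = R (f hb.choose) := by
      simp only [G, ContinuousMap.coe_mk, Finsupp.onFinset_apply, H]
      rw [dif_pos hb]
    rw [hG]
    have h1 := hR (f hb.choose)
    have h2 := small_iff.1 hl x hb.choose (fun γ hγ => by
      have := hb.choose_spec
      rw [List.map_inj_left] at this
      exact (this γ (by simpa using hγ)).symm)
    rw [abs_le] at *
    constructor <;> linarith

theorem eq_of_kunen [Infinite Γ] (hK : IsKunen Γ) :
    BaCp (Γ → Bool) = borel C(Γ → Bool, ℝ) := by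
  refine le_antisymm ba_le ?_
  obtain ⟨q, hq⟩ := exists_q hK
  haveI := separable q hq
  letI m : MeasurableSpace C(Γ → Bool, ℝ) := BaCp (Γ → Bool)
  have hm : ∀ t, Measurable fun f : C(Γ → Bool, ℝ) => f t := eval_meas
  let e : ℕ × ℕ × ℕ → C(Γ → Bool, ℝ) → Γ := fun j f =>
    sel q {γ | q j.2.1 γ = j.2.2} (1 / ((j.1 : ℝ) + 1)) f
  have he : ∀ j S, MeasurableSet (e j ⁻¹' S) := fun j S =>
    sel_meas hq hm _ Nat.one_div_pos_of_nat S
  let E : List (ℕ × ℕ × ℕ) → C(Γ → Bool, ℝ) → List Γ := fun J f => J.map (fun j => e j f)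
  have hE : ∀ J S, MeasurableSet (E J ⁻¹' S) := fun J S => list_meas hK e he J S
  refine MeasurableSpace.generateFrom_le fun U hU => ?_
  have hUeq : U = ⋃ (J : List (ℕ × ℕ × ℕ)) (h : List Bool →₀ ℚ) (k : ℕ),
      ((⋂ n, {f : C(Γ → Bool, ℝ) | |f (TopologicalSpace.denseSeq (Γ → Bool) n) -
        G h (E J f) (TopologicalSpace.denseSeq (Γ → Bool) n)| ≤ 1 / ((k : ℝ) + 1)}) ∩
      E J ⁻¹' {l | Metric.closedBall (G h l) (1 / ((k : ℝ) + 1)) ⊆ U}) := by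
    ext f
    simp only [mem_iUnion, mem_inter_iff, mem_iInter, mem_ofPred_eq, mem_preimage]
    constructor
    · intro hf
      obtain ⟨ρ, hρ, hball⟩ := Metric.isOpen_iff.1 (show IsOpen U from hU) f hf
      obtain ⟨k, hk⟩ := exists_nat_one_div_lt (half_pos hρ)
      have hpos : (0 : ℝ) < 1 / ((k : ℝ) + 1) := Nat.one_div_pos_of_nat
      obtain ⟨F, hF, hFs⟩ := exists_finset' f (half_pos hpos)
      have hJ : ∃ J, E J f = F.toList := by
        have : F.toList ∈ range (List.map (fun j => e j f)) := by
          rw [Set.range_list_map]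
          intro γ hγ
          obtain ⟨k, hk⟩ := hFs γ (by simpa using hγ)
          obtain ⟨n, i, hni⟩ := sel_cover hq Nat.one_div_pos_of_nat hk
          exact ⟨(k, n, i), hni⟩
        exact this
      obtain ⟨J, hJ⟩ := hJ
      obtain ⟨h, hh⟩ := exists_G f (half_pos hpos) (E J f) (hF.mono (by rw [hJ]; simp) le_rfl)
      have hh' : ∀ x, |f x - G h (E J f) x| ≤ 1 / ((k : ℝ) + 1) := fun x =>
        (hh x).trans (by linarith)
      refine ⟨J, h, k, fun n => hh' _, fun g hg => hball ?_⟩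
      have hd : dist f (G h (E J f)) ≤ 1 / ((k : ℝ) + 1) :=
        (ContinuousMap.dist_le hpos.le).2 fun x => by rw [Real.dist_eq]; exact hh' x
      rw [Metric.mem_closedBall] at hg
      rw [Metric.mem_ball]
      have := dist_triangle_right g f (G h (E J f))
      linarith
    · rintro ⟨J, h, k, h1, h2⟩
      have hpos : (0 : ℝ) < 1 / ((k : ℝ) + 1) := Nat.one_div_pos_of_nat
      refine h2 (Metric.mem_closedBall.2 ((ContinuousMap.dist_le hpos.le).2 fun x => ?_))
      rw [Real.dist_eq]
      have hcl : IsClosed {x : Γ → Bool | |f x - G h (E J f) x| ≤ 1 / ((k : ℝ) + 1)} :=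
        isClosed_le (f.continuous.sub (G h (E J f)).continuous).abs continuous_const
      have hd := TopologicalSpace.denseRange_denseSeq (Γ → Bool)
      have h3 := closure_minimal (range_subset_iff.2 h1) hcl
      rw [hd.closure_range] at h3
      exact h3 (mem_univ x)
  rw [hUeq]
  refine MeasurableSet.iUnion fun J => MeasurableSet.iUnion fun h => MeasurableSet.iUnion fun k =>
    (MeasurableSet.iInter fun n => ?_).inter (hE J _)
  refine measurableSet_le ((hm _).sub ?_).abs measurable_const
  intro S _
  exact hE J {l | G h l (TopologicalSpace.denseSeq (Γ → Bool) n) ∈ S}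

end

end KunenAux

theorem stmt0 (Γ : Type*) [Infinite Γ] :
    BaCp (Γ → Bool) = borel C(Γ → Bool, ℝ) ↔ IsKunen Γ :=
  ⟨KunenAux.kunen_of_eq, KunenAux.eq_of_kunen⟩
end

section
/- Let Γ be an infinite set and let C(2^Γ,2) denote the set of all continuous {0,1}-valued functions on 2^Γ. Then |Γ| is a Kunen cardinal if and only if the trace of Ba(C_p(2^Γ)) on C(2^Γ,2) is the full power set of C(2^Γ,2), i.e. for every subset X of C(2^Γ,2) there exists B ∈ Ba(C_p(2^Γ)) with B ∩ C(2^Γ,2) = X. -/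
/-- `C(2^Γ, 2)`: the set of continuous `{0,1}`-valued functions on `2^Γ`. -/
def Ctwo (Γ : Type*) : Set C(Γ → Bool, ℝ) := {f | ∀ x, f x = 0 ∨ f x = 1}

open Set TopologicalSpace in
theorem kunen_sep {Γ : Type*} (h : IsKunen Γ) :
    ∃ Q : Set (Γ → Bool), Q.Countable ∧
      ∀ (F : Finset Γ) (x : Γ → Bool), ∃ q ∈ Q, ∀ a ∈ F, q a = x a := by
  classical
  have key : ∀ S : Set (Γ × Γ), ∃ C : ℕ → Set Γ, ∀ a a' b, (∀ n, a ∈ C n ↔ a' ∈ C n) →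
      ((a, b) ∈ S ↔ (a', b) ∈ S) := by
    intro S
    have hS : @MeasurableSet _ (productSigma Γ) S := by
      rw [show productSigma Γ = ⊤ from h]; trivial
    refine MeasurableSpace.generateFrom_induction {S : Set (Γ × Γ) | ∃ A B : Set Γ, S = A ×ˢ B}
      (fun S _ => ∃ C : ℕ → Set Γ, ∀ a a' b, (∀ n, a ∈ C n ↔ a' ∈ C n) →
      ((a, b) ∈ S ↔ (a', b) ∈ S)) ?_ ?_ ?_ ?_ S hS
    · rintro _ ⟨A, B, rfl⟩ _
      refine ⟨fun _ => A, fun a a' b hh => ?_⟩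
      simp only [Set.mem_prod, hh 0]
    · exact ⟨fun _ => ∅, by simp⟩
    · rintro t _ ⟨C, hC⟩
      exact ⟨C, fun a a' b hh => not_congr (hC a a' b hh)⟩
    · intro s _ hs
      choose C hC using hs
      refine ⟨fun n => C n.unpair.1 n.unpair.2, fun a a' b hh => ?_⟩
      simp only [Set.mem_iUnion]
      refine exists_congr fun n => hC n a a' b fun k => ?_
      simpa using hh (Nat.pair n k)
  obtain ⟨C, hC⟩ := key {p | p.1 = p.2}
  let c : Γ → (ℕ → Bool) := fun a n => decide (a ∈ C n)
  have hc : Function.Injective c := by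
    intro a a' haa
    have := hC a a' a (fun n => by simpa [c] using congrFun haa n)
    simpa [eq_comm] using this
  have hB := isBasis_countableBasis (ℕ → Bool)
  have : Countable (countableBasis (ℕ → Bool)) := (countable_countableBasis _).to_subtype
  refine ⟨Set.range (fun G : Finset (countableBasis (ℕ → Bool)) =>
    fun a => decide (∃ U ∈ G, c a ∈ U.1)), Set.countable_range _, fun F x => ?_⟩
  have hU : ∀ a : Γ, ∃ U : countableBasis (ℕ → Bool), c a ∈ U.1 ∧ ∀ b ∈ F, c b ∈ U.1 → b = a := by
    intro a
    have ho : IsOpen ((((F.erase a).image c : Finset (ℕ → Bool)) : Set (ℕ → Bool))ᶜ) :=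
      (Finset.finite_toSet _).isClosed.isOpen_compl
    obtain ⟨U, hU, haU, hUs⟩ := hB.exists_subset_of_mem_open
      (a := c a) (by simp [hc.eq_iff]) ho
    refine ⟨⟨U, hU⟩, haU, fun b hb hbU => ?_⟩
    by_contra hne
    apply hUs hbU
    simp only [Finset.coe_image, Set.mem_image]
    exact ⟨b, by simp [hne, hb], rfl⟩
  choose U hU1 hU2 using hU
  refine ⟨_, ⟨(F.filter (fun a => x a = true)).image U, rfl⟩, fun a ha => ?_⟩
  rcases hx : x a with _ | _
  · simp only [decide_eq_false_iff_not, Finset.mem_image, Finset.mem_filter]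
    rintro ⟨_, ⟨b, ⟨hb, hxb⟩, rfl⟩, hab⟩
    have := hU2 b a ha hab
    subst this
    simp [hx] at hxb
  · simp only [decide_eq_true_eq, Finset.mem_image, Finset.mem_filter]
    exact ⟨_, ⟨a, ⟨ha, hx⟩, rfl⟩, hU1 a⟩

theorem finite_dep {Γ : Type*} (f : C(Γ → Bool, ℝ)) (hf : f ∈ Ctwo Γ) :
    ∃ F : Finset Γ, DependsOn f (F : Set Γ) := by
  classical
  have h1 : ∀ x : Γ → Bool, ∃ F : Finset Γ, ∀ y, (∀ a ∈ F, y a = x a) → f y = f x := by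
    intro x
    have ho : IsOpen (f ⁻¹' (Metric.ball (f x) 1)) := Metric.isOpen_ball.preimage f.continuous
    obtain ⟨I, u, hu, hsub⟩ := isOpen_pi_iff.1 ho x (by simp)
    refine ⟨I, fun y hy => ?_⟩
    have : y ∈ f ⁻¹' (Metric.ball (f x) 1) := hsub (fun a ha => by
      rw [hy a ha]; exact (hu a ha).2)
    simp only [Set.mem_preimage, Metric.mem_ball, Real.dist_eq] at this
    rcases hf x with h | h <;> rcases hf y with h' | h' <;> rw [h, h'] at this ⊢ <;> norm_num at this
  choose F hF using h1
  obtain ⟨t, -, ht⟩ := isCompact_univ.elim_nhds_subcover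
    (fun x : Γ → Bool => {y | ∀ a ∈ F x, y a = x a}) (fun x _ => by
      have : {y : Γ → Bool | ∀ a ∈ F x, y a = x a} = Set.pi (F x : Set Γ) (fun a => {x a}) := by
        ext y; simp [Set.mem_pi]
      rw [this]
      exact set_pi_mem_nhds (F x).finite_toSet (fun a _ => by simp))
  refine ⟨t.biUnion F, fun y z hyz => ?_⟩
  have hy := ht (Set.mem_univ y)
  simp only [Set.mem_iUnion] at hy
  obtain ⟨x, hx, hy⟩ := hy
  rw [hF x y hy, hF x z]
  intro a ha
  rw [← hyz a (by simpa using ⟨x, hx, ha⟩)]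
  exact hy a ha

theorem supp_exists {Γ : Type*} (f : C(Γ → Bool, ℝ)) (hf : f ∈ Ctwo Γ) :
    ∃ F : Finset Γ, ∀ S : Set Γ, DependsOn f Sᶜ ↔ ∀ a ∈ F, a ∉ S := by
  classical
  have hex : ∃ n, ∃ F : Finset Γ, F.card = n ∧ DependsOn f (F : Set Γ) := by
    obtain ⟨F, h⟩ := finite_dep f hf
    exact ⟨_, F, rfl, h⟩
  obtain ⟨F, hFn, hF⟩ := Nat.find_spec hex
  refine ⟨F, fun S => ⟨fun hS a ha haS => ?_, fun h x y hxy => hF fun a ha => hxy a (h a ha)⟩⟩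
  have hlt : (F.filter (· ∉ S)).card < F.card :=
    Finset.card_lt_card (Finset.filter_ssubset.2 ⟨a, ha, by simpa using haS⟩)
  rw [hFn] at hlt
  refine Nat.find_min hex hlt ⟨_, rfl, fun x y hxy => ?_⟩
  let z : Γ → Bool := fun a => if a ∈ F then x a else y a
  have h1 : f x = f z := hF fun a ha => by
    have : a ∈ F := ha
    simp [z, this]
  have h2 : f z = f y := hS fun a ha => by
    by_cases haF : a ∈ F
    · simp only [z, haF, if_true]
      exact hxy a (by simpa using ⟨haF, ha⟩)
    · simp [z, haF]
  exact h1.trans h2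

theorem countable_dep {Γ : Type*} (s : List Γ) :
    {f : Ctwo Γ | DependsOn f.1 {a | a ∈ s}}.Countable := by
  classical
  have : Finite {a // a ∈ s} := by
    have := s.toFinset.finite_toSet
    exact (this.subset (t := {a | a ∈ s}) (by intro a; simp)).to_subtype
  refine Set.MapsTo.countable_of_injOn
    (f := fun (f : Ctwo Γ) (p : {a // a ∈ s} → Bool) =>
      decide (f.1 (fun a => if h : a ∈ s then p ⟨a, h⟩ else false) = 0))
    (t := Set.univ) (fun _ _ => Set.mem_univ _) ?_ (Set.to_countable _)
  intro f hf g hg hfg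
  apply Subtype.ext
  ext x
  have := congrFun hfg (fun a => x a.1)
  simp only [decide_eq_decide] at this
  have e1 := hf (x := x) (y := fun a => if h : a ∈ s then x a else false)
    (fun a ha => by have : a ∈ s := ha; simp [this])
  have e2 := hg (x := x) (y := fun a => if h : a ∈ s then x a else false)
    (fun a ha => by have : a ∈ s := ha; simp [this])
  rw [← e1, ← e2] at this
  rcases f.2 x with h | h <;> rcases g.2 x with h' | h' <;> rw [h, h'] at this ⊢ <;> simp at this

theorem kunen_fwd {Γ : Type*} [Infinite Γ] (hK : IsKunen Γ) (X : Set (Ctwo Γ)) :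
    @MeasurableSet _ ((BaCp (Γ → Bool)).comap Subtype.val) X := by
  classical
  obtain ⟨Q, hQc, hQ⟩ := kunen_sep hK
  have : Countable Q := hQc.to_subtype
  letI m : MeasurableSpace (Ctwo Γ) := (BaCp (Γ → Bool)).comap Subtype.val
  have hev : ∀ t : Γ → Bool, Measurable (fun f : Ctwo Γ => f.1 t) := by
    intro t
    have h1 : @Measurable _ _ (BaCp (Γ → Bool)) _ (fun f : C(Γ → Bool, ℝ) => f t) := by
      rw [measurable_iff_comap_le]
      exact le_iSup (fun t : Γ → Bool =>
        MeasurableSpace.comap (fun f : C(Γ → Bool, ℝ) => f t) Real.measurableSpace) t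
    exact @Measurable.comp _ _ _ m (BaCp (Γ → Bool)) _ _ _ h1 (comap_measurable _)
  choose s hs using fun f : Ctwo Γ => supp_exists f.1 f.2
  have hdep : ∀ f : Ctwo Γ, DependsOn f.1 (s f : Set Γ) := fun f => by
    have := (hs f (s f : Set Γ)ᶜ).2 (by simp)
    simpa using this
  -- the hitting sets are measurable
  have hD : ∀ S : Set Γ, MeasurableSet {f : Ctwo Γ | ∃ a ∈ s f, a ∈ S} := by
    intro S
    have : {f : Ctwo Γ | ∃ a ∈ s f, a ∈ S} =
        (⋂ q : Q, ⋂ r : Q, {f : Ctwo Γ | f.1 q.1 = f.1 (S.piecewise r.1 q.1)})ᶜ := by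
      rw [eq_compl_comm]
      ext f
      simp only [Set.mem_iInter, Set.mem_setOf_eq, Set.mem_compl_iff, not_exists, not_and]
      rw [← hs f S]
      constructor
      · intro h x y hxy
        obtain ⟨q, hq, hqx⟩ := hQ (s f) x
        obtain ⟨r, hr, hry⟩ := hQ (s f) y
        have e := h ⟨q, hq⟩ ⟨r, hr⟩
        rw [← hdep f (x := q) (y := x) hqx, e]
        refine hdep f fun a ha => ?_
        by_cases haS : a ∈ S
        · simp [haS, hry a ha]
        · simp [haS, hqx a ha, hxy a haS]
      · intro h q r
        exact h fun a ha => by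
          have : a ∉ S := ha
          simp [this]
    rw [this]
    exact (MeasurableSet.iInter fun q => MeasurableSet.iInter fun r =>
      measurableSet_eq_fun (hev _) (hev _)).compl
  let a0 : Γ := Classical.arbitrary Γ
  let Sg : Set Γ → Set (Ctwo Γ) := fun A => {f | ∃ a, ∀ b, b ∈ s f ∧ b ∈ A ↔ b = a}
  have hSg : ∀ A, MeasurableSet (Sg A) := by
    intro A
    have : Sg A = {f | ∃ a ∈ s f, a ∈ A} ∩ ⋂ q : Q,
        ({f | ∃ a ∈ s f, a ∈ A ∩ {a | q.1 a = true}} ∩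
          {f | ∃ a ∈ s f, a ∈ A ∩ {a | q.1 a = false}})ᶜ := by
      ext f
      simp only [Sg, Set.mem_setOf_eq, Set.mem_inter_iff, Set.mem_iInter, Set.mem_compl_iff]
      constructor
      · rintro ⟨a, ha⟩
        refine ⟨⟨a, (ha a).2 rfl⟩, ?_⟩
        rintro q ⟨⟨b, hb, hbA, hbq⟩, ⟨c, hc, hcA, hcq⟩⟩
        rw [(ha b).1 ⟨hb, hbA⟩] at hbq
        rw [(ha c).1 ⟨hc, hcA⟩, hbq] at hcq
        cases hcq
      · rintro ⟨⟨a, ha, haA⟩, h⟩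
        refine ⟨a, fun b => ⟨fun ⟨hb, hbA⟩ => ?_, fun h => h ▸ ⟨ha, haA⟩⟩⟩
        by_contra hne
        obtain ⟨q, hq, hqx⟩ := hQ (s f) (fun c => decide (c = a))
        refine h ⟨q, hq⟩ ⟨⟨a, ha, haA, ?_⟩, ⟨b, hb, hbA, ?_⟩⟩
        · simp [hqx a ha]
        · simp [hqx b hb, hne]
    rw [this]
    exact (hD _).inter (MeasurableSet.iInter fun q => ((hD _).inter (hD _)).compl)
  let u : Set Γ → Ctwo Γ → Γ := fun A f => if h : f ∈ Sg A then h.choose else a0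
  have hu : ∀ A f a, (∀ b, b ∈ s f ∧ b ∈ A ↔ b = a) → u A f = a := by
    intro A f a ha
    have h : f ∈ Sg A := ⟨a, ha⟩
    simp only [u, h, dif_pos]
    exact (ha _).1 ((h.choose_spec _).2 rfl)
  have hum : ∀ A, ∀ S : Set Γ, MeasurableSet (u A ⁻¹' S) := by
    intro A S
    have : u A ⁻¹' S = (Sg A ∩ {f | ∃ a ∈ s f, a ∈ A ∩ S}) ∪ ((Sg A)ᶜ ∩ {_f | a0 ∈ S}) := by
      ext f
      by_cases h : f ∈ Sg A
      · obtain ⟨a, ha⟩ := id h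
        simp only [Set.mem_preimage, hu A f a ha, Set.mem_union, Set.mem_inter_iff, h, true_and,
          Set.mem_compl_iff, not_true, false_and, or_false, Set.mem_setOf_eq]
        constructor
        · intro haS
          exact ⟨a, ((ha a).2 rfl).1, ((ha a).2 rfl).2, haS⟩
        · rintro ⟨b, hb, hbA, hbS⟩
          rwa [← (ha b).1 ⟨hb, hbA⟩]
      · simp [h, u]
    rw [this]
    exact ((hSg A).inter (hD _)).union ((hSg A).compl.inter (MeasurableSet.const _))
  -- pairs
  have hpair : ∀ g h : Ctwo Γ → Γ, (∀ S, MeasurableSet (g ⁻¹' S)) → (∀ S, MeasurableSet (h ⁻¹' S)) →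
      ∀ S : Set (Γ × Γ), MeasurableSet ((fun f => (g f, h f)) ⁻¹' S) := by
    intro g h hg hh S
    have h1 : @Measurable _ _ m (productSigma Γ) (fun f => (g f, h f)) := by
      refine measurable_generateFrom ?_
      rintro _ ⟨A, B, rfl⟩
      exact (hg A).inter (hh B)
    refine h1 ?_
    rw [show productSigma Γ = ⊤ from hK]; trivial
  obtain ⟨j⟩ : Nonempty (List Γ ≃ Γ) := Cardinal.eq.1 (Cardinal.mk_list_eq_mk Γ)
  let H : List Q → Ctwo Γ → List Γ := fun L f => L.map (fun q => u {a | q.1 a = true} f)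
  have hH : ∀ L, ∀ S : Set (List Γ), MeasurableSet (H L ⁻¹' S) := by
    intro L
    induction L with
    | nil => intro S; exact MeasurableSet.const ([] ∈ S)
    | cons q L ih =>
      intro S
      have := hpair (u {a | q.1 a = true}) (fun f => j (H L f)) (hum _)
        (fun S => ih (j ⁻¹' S)) {p | p.1 :: j.symm p.2 ∈ S}
      simpa [H, Set.preimage] using this
  -- enumeration
  have hE : ∀ l : List Γ, ∃ e : ℕ → Ctwo Γ,
      {f : Ctwo Γ | DependsOn f.1 {a | a ∈ l}} = Set.range e := fun l =>
    (countable_dep l).exists_eq_range ⟨⟨0, fun x => Or.inl rfl⟩, fun x y _ => rfl⟩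
  choose E hE using hE
  have hX : X = ⋃ L : List Q, ⋃ k : ℕ,
      (H L ⁻¹' {l | E l k ∈ X}) ∩ ⋂ q : Q, {f | f.1 q.1 = (E (H L f) k).1 q.1} := by
    ext f
    simp only [Set.mem_iUnion, Set.mem_inter_iff, Set.mem_preimage, Set.mem_setOf_eq,
      Set.mem_iInter]
    constructor
    · intro hf
      have hq : ∀ a : Γ, ∃ q : Q, a ∈ s f → u {a | q.1 a = true} f = a := by
        intro a
        obtain ⟨q, hq, hqx⟩ := hQ (s f) (fun c => decide (c = a))
        refine ⟨⟨q, hq⟩, fun ha => hu _ _ _ fun b => ⟨fun ⟨hb, hb'⟩ => ?_, ?_⟩⟩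
        · simpa [hqx b hb] using hb'
        · rintro rfl
          exact ⟨ha, by simp [hqx b ha]⟩
      choose q hq using hq
      have hmem : f ∈ {g : Ctwo Γ | DependsOn g.1 {a | a ∈ H ((s f).toList.map q) f}} := by
        intro x y hxy
        refine hdep f fun a ha => hxy a ?_
        simp only [H, Set.mem_setOf_eq, List.mem_map]
        exact ⟨q a, ⟨a, by simpa using ha, rfl⟩, hq a ha⟩
      rw [hE] at hmem
      obtain ⟨k, hk⟩ := hmem
      refine ⟨(s f).toList.map q, k, ?_, fun q => ?_⟩
      · rw [hk]; exact hf
      · rw [hk]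
    · rintro ⟨L, k, h1, h2⟩
      have : f = E (H L f) k := by
        apply Subtype.ext
        ext x
        obtain ⟨q, hq, hqx⟩ := hQ (s f ∪ s (E (H L f) k)) x
        rw [← hdep f (x := q) (y := x) fun a ha => hqx a (Finset.mem_union_left _ ha),
          ← hdep (E (H L f) k) (x := q) (y := x) fun a ha => hqx a (Finset.mem_union_right _ ha)]
        exact h2 ⟨q, hq⟩
      rw [this]; exact h1
  rw [hX]
  refine MeasurableSet.iUnion fun L => MeasurableSet.iUnion fun k => (hH L _).inter
    (MeasurableSet.iInter fun q => measurableSet_eq_fun (hev _) ?_)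
  intro T _
  exact hH L {l | (E l k).1 q.1 ∈ T}

theorem kunen_bwd {Γ : Type*} [Infinite Γ]
    (h : ∀ X ⊆ Ctwo Γ, ∃ B : Set C(Γ → Bool, ℝ),
        @MeasurableSet _ (BaCp (Γ → Bool)) B ∧ B ∩ Ctwo Γ = X) : IsKunen Γ := by
  classical
  obtain ⟨e⟩ : Nonempty (Γ ⊕ Γ ≃ Γ) := by
    apply Cardinal.eq.1
    simp [Cardinal.add_eq_self (Cardinal.aleph0_le_mk Γ)]
  let φ : Γ × Γ → C(Γ → Bool, ℝ) := fun p =>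
    ⟨fun x => if (x (e (Sum.inl p.1)) && x (e (Sum.inr p.2))) = true then 1 else 0, by
      have : Continuous (fun b : Bool × Bool => if (b.1 && b.2) = true then (1 : ℝ) else 0) :=
        continuous_of_discreteTopology
      have h2 : Continuous (fun x : Γ → Bool => (x (e (Sum.inl p.1)), x (e (Sum.inr p.2)))) := by
        fun_prop
      exact this.comp h2⟩
  have hφ : ∀ p x, φ p x =
    if (x (e (Sum.inl p.1)) && x (e (Sum.inr p.2))) = true then 1 else 0 := fun _ _ => rfl
  have hφ2 : ∀ p, φ p ∈ Ctwo Γ := by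
    intro p x
    rw [hφ]
    split_ifs <;> simp
  have hinj : Function.Injective φ := by
    rintro ⟨a, b⟩ ⟨a', b'⟩ hp
    have := DFunLike.congr_fun hp
      (fun c => decide (c = e (Sum.inl a)) || decide (c = e (Sum.inr b)))
    simp only [hφ] at this
    by_contra hne
    simp at this
    exact hne (by simp [this])
  have hm : @Measurable _ _ (productSigma Γ) (BaCp (Γ → Bool)) φ := by
    rw [measurable_iff_comap_le, BaCp, MeasurableSpace.comap_iSup]
    refine iSup_le fun t => ?_
    rw [MeasurableSpace.comap_comp, ← measurable_iff_comap_le]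
    letI := productSigma Γ
    change Measurable fun p : Γ × Γ =>
      if (t (e (Sum.inl p.1)) && t (e (Sum.inr p.2))) = true then (1 : ℝ) else 0
    refine Measurable.ite ?_ measurable_const measurable_const
    apply MeasurableSpace.measurableSet_generateFrom
    refine ⟨{a | t (e (Sum.inl a)) = true}, {b | t (e (Sum.inr b)) = true}, ?_⟩
    ext p
    simp
  refine top_unique fun S _ => ?_
  obtain ⟨B, hB, hBS⟩ := h (φ '' S) (by rintro _ ⟨p, _, rfl⟩; exact hφ2 p)
  have : S = φ ⁻¹' B := by
    ext p
    rw [← hinj.mem_set_image, ← hBS]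
    simp [hφ2]
  rw [this]
  exact hm hB

theorem stmt1 (Γ : Type*) [Infinite Γ] :
    IsKunen Γ ↔
      ∀ X ⊆ Ctwo Γ, ∃ B : Set C(Γ → Bool, ℝ),
        @MeasurableSet _ (BaCp (Γ → Bool)) B ∧ B ∩ Ctwo Γ = X := by
  refine ⟨fun hK X hX => ?_, kunen_bwd⟩
  obtain ⟨B, hB, hBX⟩ := kunen_fwd hK (Subtype.val ⁻¹' X)
  refine ⟨B, hB, ?_⟩
  ext f
  constructor
  · rintro ⟨hf, hf2⟩
    have : (⟨f, hf2⟩ : Ctwo Γ) ∈ Subtype.val ⁻¹' B := hf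
    rw [hBX] at this
    exact this
  · intro hf
    have : (⟨f, hX hf⟩ : Ctwo Γ) ∈ Subtype.val ⁻¹' X := hf
    rw [← hBX] at this
    exact ⟨this, hX hf⟩
end

section
/- Let K be a compact Hausdorff space, let κ be a Kunen cardinal, and suppose there exists a continuous surjection from 2^κ onto K. Then Ba(C_p(K)) = Bo(C(K)). -/
open Set Filter Topology TopologicalSpace

theorem kunen_sep_s2 {ι : Type*} (h : IsKunen ι) : ∃ e : ι → ℕ → Bool, Function.Injective e := by
  classical
  have key : ∀ S : Set (ι × ι), ∃ A : ℕ → Set ι, ∀ i j k, (∀ n, i ∈ A n ↔ j ∈ A n) →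
      ((i, k) ∈ S ↔ (j, k) ∈ S) := by
    intro S
    have hS : @MeasurableSet _ (MeasurableSpace.generateFrom
        {S : Set (ι × ι) | ∃ A B : Set ι, S = A ×ˢ B}) S := by
      have h' : MeasurableSpace.generateFrom {S : Set (ι × ι) | ∃ A B : Set ι, S = A ×ˢ B} = ⊤ := h
      rw [h']; trivial
    induction S, hS using MeasurableSpace.generateFrom_induction with
    | hC t ht _ =>
      obtain ⟨A, B, rfl⟩ := ht
      refine ⟨fun _ => A, fun i j k hh => ?_⟩
      simp [hh 0]
    | empty => exact ⟨fun _ => ∅, by simp⟩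
    | compl t _ ih =>
      obtain ⟨A, hA⟩ := ih
      exact ⟨A, fun i j k hh => not_congr (hA i j k hh)⟩
    | iUnion s _ ih =>
      choose A hA using ih
      refine ⟨fun n => A n.unpair.1 n.unpair.2, fun i j k hh => ?_⟩
      simp only [mem_iUnion]
      refine exists_congr fun n => hA n i j k fun m => ?_
      simpa using hh (Nat.pair n m)
  obtain ⟨A, hA⟩ := key {p | p.1 = p.2}
  refine ⟨fun i n => decide (i ∈ A n), fun i j hij => ?_⟩
  have := hA i j j (fun n => by simpa using congrFun hij n)
  simpa using this

theorem kunen_sepfin {ι : Type*} {e : ι → ℕ → Bool} (he : Function.Injective e) (x : ι → Bool)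
    (F : Finset ι) : ∃ C : Clopens (ℕ → Bool), ∀ i ∈ F, (e i ∈ C ↔ x i = true) := by
  classical
  have h1 : IsClosed (e '' {i | i ∈ F ∧ x i = true}) :=
    ((F.finite_toSet.subset (by intro i hi; exact hi.1)).image e).isClosed
  have h2 : IsClosed (e '' {i | i ∈ F ∧ x i = false}) :=
    ((F.finite_toSet.subset (by intro i hi; exact hi.1)).image e).isClosed
  obtain ⟨C, hC, hZ, hU⟩ := exists_clopen_of_closed_subset_open h1 h2.isOpen_compl (by
    rintro _ ⟨i, hi, rfl⟩ ⟨j, hj, hij⟩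
    have := he hij
    subst this
    have := hi.2.symm.trans hj.2
    simp at this)
  refine ⟨⟨C, hC⟩, fun i hi => ⟨fun hx => ?_, fun hx => hZ ⟨i, ⟨hi, hx⟩, rfl⟩⟩⟩
  by_contra hx'
  exact hU hx ⟨i, ⟨hi, by simpa using hx'⟩, rfl⟩

theorem modulus {ι : Type*} (f : C(ι → Bool, ℝ)) {ε : ℝ} (hε : 0 < ε) :
    ∃ F : Finset ι, ∀ x y : ι → Bool, (∀ i ∈ F, x i = y i) → |f x - f y| < ε := by
  have hu := CompactSpace.uniformContinuous_of_continuous f.continuous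
  have := hu (Metric.dist_mem_uniformity hε)
  rw [Filter.mem_map, Pi.uniformity, Filter.mem_iInf_finite] at this
  obtain ⟨F, hF⟩ := this
  refine ⟨F, fun x y hxy => ?_⟩
  have hp : (𝓟 {((x, y) : (ι → Bool) × (ι → Bool))} : Filter _) ≤
      ⨅ i ∈ F, Filter.comap (fun a : (ι → Bool) × (ι → Bool) => (a.1 i, a.2 i)) (uniformity Bool) := by
    refine le_iInf₂ fun i hi => ?_
    rw [← Filter.map_le_iff_le_comap, Filter.map_principal, image_singleton]
    simp only [hxy i hi]
    refine le_trans ?_ refl_le_uniformity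
    simp
  have := hp hF
  simpa [Real.dist_eq] using this

def SmallOsc {ι : Type*} (A : Set ι) (ε : ℝ) (f : C(ι → Bool, ℝ)) : Prop :=
  ∀ x y : ι → Bool, (∀ i, i ∉ A → x i = y i) → |f x - f y| ≤ ε

section
variable {ι : Type*} {A B : Set ι} {ε δ : ℝ} {f : C(ι → Bool, ℝ)}

theorem SmallOsc.mono (h : SmallOsc A ε f) (hB : B ⊆ A) (hδ : ε ≤ δ) : SmallOsc B δ f :=
  fun x y hxy => (h x y fun i hi => hxy i fun hb => hi (hB hb)).trans hδ

theorem SmallOsc.union (h : SmallOsc A ε f) (h' : SmallOsc B δ f) : SmallOsc (A ∪ B) (ε + δ) f := by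
  classical
  intro x y hxy
  have h1 := h x (A.piecewise y x) (fun i hi => by simp [hi])
  have h2 := h' (A.piecewise y x) y (fun i hi => by
    by_cases hA : i ∈ A
    · simp [hA]
    · simpa [hA] using hxy i (by simp [hA, hi]))
  exact (abs_sub_le _ _ _).trans (add_le_add h1 h2)

theorem SmallOsc.of_finset (F : Finset ι)
    (hF : ∀ x y : ι → Bool, (∀ i ∈ F, x i = y i) → |f x - f y| < ε)
    (hA : ∀ i ∈ F, i ∉ A) : SmallOsc A ε f :=
  fun x y hxy => (hF x y fun i hi => hxy i (hA i hi)).le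

theorem SmallOsc.finite (F : Finset ι) (h : ∀ i ∈ F, SmallOsc {i} 0 f) : SmallOsc (F : Set ι) 0 f := by
  classical
  induction F using Finset.induction_on with
  | empty =>
    intro x y hxy
    have : x = y := funext fun i => hxy i (by simp)
    simp [this]
  | insert a s _ ih =>
    have := (h a (by simp)).union (ih fun i hi => h i (by simp [hi]))
    refine this.mono ?_ (by simp)
    intro i hi
    simpa using hi

theorem SmallOsc.iUnion {A : ℕ → Set ι} (hm : Monotone A) (h : ∀ n, SmallOsc (A n) ε f) :
    SmallOsc (⋃ n, A n) ε f := by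
  classical
  intro x y hxy
  have ht : Tendsto (fun n => (A n).piecewise y x) atTop (𝓝 y) := by
    rw [tendsto_pi_nhds]
    intro i
    by_cases hi : i ∈ ⋃ n, A n
    · obtain ⟨n, hn⟩ := mem_iUnion.1 hi
      refine tendsto_const_nhds.congr' ?_
      filter_upwards [eventually_ge_atTop n] with m hm'
      simp [hm hm' hn]
    · refine tendsto_const_nhds.congr fun n => ?_
      by_cases hin : i ∈ A n
      · simp [hin]
      · simp [hin, hxy i hi]
  have h2 : Tendsto (fun n => |f x - f ((A n).piecewise y x)|) atTop (𝓝 |f x - f y|) :=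
    ((tendsto_const_nhds (x := f x)).sub ((f.continuous.tendsto y).comp ht)).abs
  exact le_of_tendsto' h2 fun n => h n _ _ fun i hi => by simp [hi]

/-- the selection condition -/
def Rsel (e : ι → ℕ → Bool) (C : Clopens (ℕ → Bool)) (ε : ℝ) (f : C(ι → Bool, ℝ)) : Prop :=
  ¬ SmallOsc (e ⁻¹' C) (3 * ε) f ∧ ∀ B : Clopens (ℕ → Bool),
    SmallOsc (e ⁻¹' C ∩ e ⁻¹' B) ε f ∨ SmallOsc (e ⁻¹' C \ e ⁻¹' B) ε f

theorem Rsel.exists {e : ι → ℕ → Bool} (he : Function.Injective e) {C : Clopens (ℕ → Bool)}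
    (hε : 0 < ε) (h : Rsel e C ε f) : ∃ i, SmallOsc (e ⁻¹' C \ {i}) ε f := by
  classical
  obtain ⟨h1, h2⟩ := h
  let cl : (ℕ → Bool) → ℕ → Clopens (ℕ → Bool) := fun p n =>
    ⟨⋂ k ∈ Finset.range n, {x | x k = p k}, isClopen_biInter_finset fun k _ =>
      (isClopen_discrete {p k}).preimage (continuous_apply k)⟩
  have hcl : ∀ p n x, x ∈ cl p n ↔ ∀ k < n, x k = p k := by
    intro p n x
    change x ∈ (⋂ k ∈ Finset.range n, {x | x k = p k} : Set (ℕ → Bool)) ↔ _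
    simp
  have hp : ∀ n, ∃ b : Bool, SmallOsc (e ⁻¹' C \ {i | e i n = b}) ε f := by
    intro n
    have := h2 ⟨{x | x n = true}, (isClopen_discrete {true}).preimage (continuous_apply n)⟩
    rcases this with h | h
    · refine ⟨false, h.mono ?_ le_rfl⟩
      rintro i ⟨hi, hi'⟩
      exact ⟨hi, show e i n = true by simpa using hi'⟩
    · exact ⟨true, h⟩
  choose p hp using hp
  have hs : ∀ n, SmallOsc (e ⁻¹' C \ e ⁻¹' (cl p n)) ε f := by
    intro n
    induction n with
    | zero =>
      intro x y hxy
      have : x = y := funext fun i => hxy i (by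
        rintro ⟨_, hi⟩
        exact hi ((hcl _ _ _).2 (by simp)))
      simp [this, hε.le]
    | succ n ih =>
      have h3 : SmallOsc (e ⁻¹' C \ e ⁻¹' (cl p (n+1))) (ε + ε) f := by
        refine (ih.union (hp n)).mono ?_ le_rfl
        rintro i ⟨hi, hi'⟩
        by_contra hh
        apply hi'
        simp only [mem_union, Set.mem_sdiff, hi, true_and, not_or, not_not] at hh
        refine (hcl _ _ _).2 fun k hk => ?_
        rcases Nat.lt_succ_iff_lt_or_eq.1 hk with hk | rfl
        · exact (hcl _ _ _).1 hh.1 k hk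
        · exact hh.2
      rcases h2 (cl p (n+1)) with h | h
      · exfalso
        apply h1
        refine (h.union h3).mono ?_ (by linarith)
        intro i hi
        by_cases hh : i ∈ e ⁻¹' (cl p (n+1))
        · exact Or.inl ⟨hi, hh⟩
        · exact Or.inr ⟨hi, hh⟩
      · exact h
  have hu := SmallOsc.iUnion (A := fun n => e ⁻¹' C \ e ⁻¹' (cl p n)) (by
    intro m n hmn i hi
    refine ⟨hi.1, fun hh => hi.2 ((hcl _ _ _).2 fun k hk => (hcl _ _ _).1 hh k (by omega))⟩) hs
  by_cases hr : ∃ i, e i = p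
  · obtain ⟨i, rfl⟩ := hr
    refine ⟨i, hu.mono ?_ le_rfl⟩
    rintro j ⟨hj, hji⟩
    have : e j ≠ e i := fun hh => hji (he hh)
    obtain ⟨k, hk⟩ := Function.ne_iff.1 this
    exact mem_iUnion.2 ⟨k+1, hj, fun hh => hk ((hcl _ _ _).1 hh k (by omega))⟩
  · exfalso
    apply h1
    refine hu.mono ?_ (by linarith)
    intro j hj
    have : e j ≠ p := fun hh => hr ⟨j, hh⟩
    obtain ⟨k, hk⟩ := Function.ne_iff.1 this
    exact mem_iUnion.2 ⟨k+1, hj, fun hh => hk ((hcl _ _ _).1 hh k (by omega))⟩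

end

section
open MeasureTheory
variable {ι : Type*} {X : Type*} [MeasurableSpace X] {T : X → C(ι → Bool, ℝ)}

theorem kunen_dense {e : ι → ℕ → Bool} (he : Function.Injective e) :
    ∃ d : ℕ → (ι → Bool), ∀ (x : ι → Bool) (F : Finset ι), ∃ n, ∀ i ∈ F, d n i = x i := by
  classical
  have : Countable (Clopens (ℕ → Bool)) :=
    Clopens.countable_iff_secondCountable.2 inferInstance
  obtain ⟨c, hc⟩ := exists_surjective_nat (Clopens (ℕ → Bool))
  refine ⟨fun n i => decide (e i ∈ c n), fun x F => ?_⟩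
  obtain ⟨C, hC⟩ := kunen_sepfin he x F
  obtain ⟨n, rfl⟩ := hc C
  refine ⟨n, fun i hi => ?_⟩
  rw [Bool.eq_iff_iff]
  simpa using hC i hi

theorem denseRange_of_fin {d : ℕ → (ι → Bool)}
    (hd : ∀ (x : ι → Bool) (F : Finset ι), ∃ n, ∀ i ∈ F, d n i = x i) : DenseRange d := by
  intro x
  rw [mem_closure_iff]
  intro o ho hx
  obtain ⟨F, u, hu, hsub⟩ := isOpen_pi_iff.1 ho x hx
  obtain ⟨n, hn⟩ := hd x F
  refine ⟨d n, hsub fun i hi => ?_, n, rfl⟩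
  rw [hn i hi]
  exact (hu i hi).2

theorem measurableSet_smallOsc (hT : ∀ x, Measurable fun f => T f x)
    {d : ℕ → (ι → Bool)} (hd : DenseRange d) (A : Set ι) (ε : ℝ) :
    MeasurableSet {f | SmallOsc A ε (T f)} := by
  classical
  have hpc : Continuous (fun p : (ι → Bool) × (ι → Bool) => A.piecewise p.1 p.2) := by
    refine continuous_pi fun i => ?_
    by_cases hi : i ∈ A
    · simp only [hi, piecewise_eq_of_mem]; fun_prop
    · simp only [hi, not_false_eq_true, piecewise_eq_of_notMem]; fun_prop
  have heq : {f | SmallOsc A ε (T f)} = ⋂ a : ℕ, ⋂ b : ℕ, ⋂ c : ℕ,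
      {f | |T f (A.piecewise (d a) (d c)) - T f (A.piecewise (d b) (d c))| ≤ ε} := by
    ext f
    simp only [mem_iInter, mem_ofPred_eq]
    refine ⟨fun h a b c => h _ _ fun i hi => by simp [hi], fun h x y hxy => ?_⟩
    have hcl : IsClosed {p : (ι → Bool) × ((ι → Bool) × (ι → Bool)) |
        |T f (A.piecewise p.1 p.2.2) - T f (A.piecewise p.2.1 p.2.2)| ≤ ε} := by
      refine isClosed_le ?_ continuous_const
      have h1 : Continuous fun p : (ι → Bool) × ((ι → Bool) × (ι → Bool)) =>
          A.piecewise p.1 p.2.2 := hpc.comp (by fun_prop : Continuous fun p :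
            (ι → Bool) × ((ι → Bool) × (ι → Bool)) => (p.1, p.2.2))
      have h2 : Continuous fun p : (ι → Bool) × ((ι → Bool) × (ι → Bool)) =>
          A.piecewise p.2.1 p.2.2 := hpc.comp (by fun_prop : Continuous fun p :
            (ι → Bool) × ((ι → Bool) × (ι → Bool)) => (p.2.1, p.2.2))
      exact (((T f).continuous.comp h1).sub ((T f).continuous.comp h2)).abs
    have hdd := hd.prodMap (hd.prodMap hd)
    have := hcl.closure_subset_iff.2 (show range (Prod.map d (Prod.map d d)) ⊆ _ by
      rintro _ ⟨⟨a, b, c⟩, rfl⟩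
      exact h a b c) (hdd (x, y, x))
    have hy : A.piecewise y x = y := by
      ext i
      by_cases hi : i ∈ A
      · simp [hi]
      · simp [hi, hxy i hi]
    simpa [hy] using this
  rw [heq]
  refine MeasurableSet.iInter fun a => MeasurableSet.iInter fun b => MeasurableSet.iInter fun c => ?_
  exact measurableSet_le (_root_.continuous_abs.measurable.comp ((hT _).sub (hT _))) measurable_const

theorem exists_coords [Nonempty ι] (hT : ∀ x, Measurable fun f => T f x)
    {e : ι → ℕ → Bool} (he : Function.Injective e) :
    ∃ t : ℕ → X → ι, (∀ k (A : Set ι), MeasurableSet (t k ⁻¹' A)) ∧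
      ∀ f i, ¬ SmallOsc {i} 0 (T f) → ∃ k, t k f = i := by
  classical
  obtain ⟨d, hd⟩ := kunen_dense he
  have hms := measurableSet_smallOsc hT (denseRange_of_fin hd)
  have : Countable (Clopens (ℕ → Bool)) :=
    Clopens.countable_iff_secondCountable.2 inferInstance
  suffices H : ∃ t : (Clopens (ℕ → Bool) × ℕ) → X → ι, (∀ k (A : Set ι), MeasurableSet (t k ⁻¹' A)) ∧
      ∀ f i, ¬ SmallOsc {i} 0 (T f) → ∃ k, t k f = i by
    obtain ⟨t, h1, h2⟩ := H
    obtain ⟨c, hc⟩ := exists_surjective_nat (Clopens (ℕ → Bool) × ℕ)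
    refine ⟨fun k => t (c k), fun k A => h1 _ A, fun f i hi => ?_⟩
    obtain ⟨k, hk⟩ := h2 f i hi
    obtain ⟨n, rfl⟩ := hc k
    exact ⟨n, hk⟩
  have hε : ∀ n : ℕ, (0 : ℝ) < 1 / ((n : ℝ) + 1) := fun n => Nat.one_div_pos_of_nat
  let i0 : ι := Classical.arbitrary ι
  let t : (Clopens (ℕ → Bool) × ℕ) → X → ι := fun k f =>
    if h : Rsel e k.1 (1 / ((k.2 : ℝ) + 1)) (T f) then (h.exists he (hε k.2)).choose else i0
  have ht : ∀ (C : Clopens (ℕ → Bool)) (n : ℕ) (f : X), Rsel e C (1 / ((n : ℝ) + 1)) (T f) →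
      SmallOsc (e ⁻¹' C \ {t (C, n) f}) (1 / ((n : ℝ) + 1)) (T f) := by
    intro C n f h
    simp only [t, h, dif_pos]
    exact (h.exists he (hε n)).choose_spec
  refine ⟨t, ?_, ?_⟩
  · rintro ⟨C, n⟩ A
    have hR : MeasurableSet {f | Rsel e C (1 / ((n : ℝ) + 1)) (T f)} := by
      have : {f | Rsel e C (1 / ((n : ℝ) + 1)) (T f)} =
          {f | SmallOsc (e ⁻¹' C) (3 * (1 / ((n : ℝ) + 1))) (T f)}ᶜ ∩
          ⋂ B : Clopens (ℕ → Bool), ({f | SmallOsc (e ⁻¹' C ∩ e ⁻¹' B) (1 / ((n : ℝ) + 1)) (T f)} ∪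
            {f | SmallOsc (e ⁻¹' C \ e ⁻¹' B) (1 / ((n : ℝ) + 1)) (T f)}) := by
        ext f
        simp [Rsel]
      rw [this]
      exact (hms _ _).compl.inter (MeasurableSet.iInter fun B => (hms _ _).union (hms _ _))
    have heq : t (C, n) ⁻¹' A = ({f | Rsel e C (1 / ((n : ℝ) + 1)) (T f)} ∩
        {f | SmallOsc (e ⁻¹' C \ A) (1 / ((n : ℝ) + 1)) (T f)}) ∪
        ({f | Rsel e C (1 / ((n : ℝ) + 1)) (T f)}ᶜ ∩ {_f | i0 ∈ A}) := by
      ext f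
      by_cases h : Rsel e C (1 / ((n : ℝ) + 1)) (T f)
      · simp only [mem_preimage, mem_union, mem_inter_iff, mem_ofPred_eq, h, true_and, mem_compl_iff,
          not_true_eq_false, false_and, or_false]
        constructor
        · intro hA
          refine (ht C n f h).mono ?_ le_rfl
          rintro j ⟨hj, hjA⟩
          refine ⟨hj, fun hh => hjA ?_⟩
          rw [mem_singleton_iff.1 hh]; exact hA
        · intro hs
          by_contra hA
          refine h.1 ((hs.union (ht C n f h)).mono ?_ (by linarith [hε n]))
          intro j hj
          by_cases hjA : j ∈ A
          · refine Or.inr ⟨hj, fun hh => hA ?_⟩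
            rw [← mem_singleton_iff.1 hh]; exact hjA
          · exact Or.inl ⟨hj, hjA⟩
      · have h' : t (C, n) f = i0 := dif_neg h
        simp only [mem_preimage, mem_union, mem_inter_iff, mem_ofPred_eq, h, h', false_and,
          mem_compl_iff, not_false_eq_true, true_and, false_or]
    rw [heq]
    exact (hR.inter (hms _ _)).union (hR.compl.inter (MeasurableSet.const _))
  · intro f i hi
    have hδ : ∃ δ > 0, ¬ SmallOsc {i} δ (T f) := by
      simp only [SmallOsc] at hi
      push Not at hi
      obtain ⟨x, y, hxy, h⟩ := hi
      refine ⟨|T f x - T f y| / 2, by linarith, fun hs => ?_⟩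
      have := hs x y hxy
      linarith
    obtain ⟨δ, hδ0, hδ⟩ := hδ
    obtain ⟨n, hn⟩ := exists_nat_one_div_lt (show 0 < δ / 3 by linarith)
    obtain ⟨F, hF⟩ := modulus (T f) (hε n)
    obtain ⟨C, hC⟩ := kunen_sepfin he (fun j => decide (j = i)) (insert i F)
    have hiC : e i ∈ C := (hC i (by simp)).2 (by simp)
    have hs : SmallOsc (e ⁻¹' C \ {i}) (1 / ((n : ℝ) + 1)) (T f) := by
      refine SmallOsc.of_finset F hF fun j hj hj' => hj'.2 ?_
      simpa using (hC j (by simp [hj])).1 hj'.1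
    have hR : Rsel e C (1 / ((n : ℝ) + 1)) (T f) := by
      refine ⟨fun h => hδ (h.mono (by simpa using hiC) (by linarith)), fun B => ?_⟩
      by_cases hB : e i ∈ B
      · refine Or.inr (hs.mono ?_ le_rfl)
        rintro j ⟨hj, hj'⟩
        refine ⟨hj, fun hh => hj' ?_⟩
        rw [mem_singleton_iff.1 hh]; exact hB
      · refine Or.inl (hs.mono ?_ le_rfl)
        rintro j ⟨hj, hj'⟩
        refine ⟨hj, fun hh => hB ?_⟩
        rw [← mem_singleton_iff.1 hh]; exact hj'
    refine ⟨(C, n), ?_⟩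
    by_contra hne
    refine hδ ((ht C n f hR).mono ?_ (by linarith))
    rintro j rfl
    exact ⟨hiC, fun hh => hne hh.symm⟩

theorem kunen_pair (hκ : IsKunen ι) {a b : X → ι} (ha : ∀ A : Set ι, MeasurableSet (a ⁻¹' A))
    (hb : ∀ A : Set ι, MeasurableSet (b ⁻¹' A)) (S : Set (ι × ι)) :
    MeasurableSet ((fun f => (a f, b f)) ⁻¹' S) := by
  have h' : MeasurableSpace.generateFrom {S : Set (ι × ι) | ∃ A B : Set ι, S = A ×ˢ B} = ⊤ := hκ
  have : @Measurable _ _ _ (MeasurableSpace.generateFrom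
      {S : Set (ι × ι) | ∃ A B : Set ι, S = A ×ˢ B}) (fun f => (a f, b f)) := by
    refine measurable_generateFrom ?_
    rintro _ ⟨A, B, rfl⟩
    exact (ha A).inter (hb B)
  refine this ?_
  rw [h']
  trivial

theorem kunen_tuple [Nonempty ι] (hκ : IsKunen ι) {t : ℕ → X → ι}
    (ht : ∀ k (A : Set ι), MeasurableSet (t k ⁻¹' A)) (m : ℕ) (S : Set (Fin m → ι)) :
    MeasurableSet ((fun f => fun k : Fin m => t k f) ⁻¹' S) := by
  cases finite_or_infinite ι with
  | inl hfin =>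
    have : (fun f => fun k : Fin m => t k f) ⁻¹' S = ⋃ s ∈ S, ⋂ k : Fin m, t k ⁻¹' {s k} := by
      ext f
      simp only [mem_preimage, mem_iUnion, mem_iInter, mem_singleton_iff, exists_prop]
      refine ⟨fun h => ⟨_, h, fun _ => rfl⟩, ?_⟩
      rintro ⟨s, hs, h⟩
      rwa [show (fun k : Fin m => t k f) = s from funext h]
    rw [this]
    exact MeasurableSet.biUnion (Set.to_countable S) fun s _ => MeasurableSet.iInter fun k => ht _ _
  | inr hinf =>
    have heq : Nonempty (ι ≃ ι × ι) := by
      rw [← Cardinal.eq]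
      simp [Cardinal.mk_prod, Cardinal.mul_eq_self (Cardinal.aleph0_le_mk ι)]
    obtain ⟨q⟩ := heq
    have key : ∀ m : ℕ, ∃ c : X → ι, ∃ dec : ι → ℕ → ι, (∀ A : Set ι, MeasurableSet (c ⁻¹' A)) ∧
        ∀ f, ∀ k < m, dec (c f) k = t k f := by
      intro m
      induction m with
      | zero => exact ⟨t 0, fun i _ => i, ht 0, by simp⟩
      | succ m ih =>
        obtain ⟨c, dec, hc, hdec⟩ := ih
        refine ⟨fun f => q.symm (c f, t m f),
          fun i k => if k < m then dec (q i).1 k else (q i).2, fun A => ?_, fun f k hk => ?_⟩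
        · exact kunen_pair hκ hc (ht m) (q.symm ⁻¹' A)
        · by_cases hk' : k < m
          · simp [hk', hdec f k hk']
          · have : k = m := by omega
            subst this
            simp
    obtain ⟨c, dec, hc, hdec⟩ := key m
    have : (fun f => fun k : Fin m => t k f) ⁻¹' S = c ⁻¹' {i | (fun k : Fin m => dec i k) ∈ S} := by
      ext f
      simp only [mem_preimage, mem_ofPred_eq]
      rw [show (fun k : Fin m => dec (c f) k) = fun k : Fin m => t k f from
        funext fun k => hdec f k k.2]
    rw [this]
    exact hc _

/-- the function `x ↦ v (x ∘ i)` -/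
def Gfun {m : ℕ} (v : (Fin m → Bool) → ℝ) (i : Fin m → ι) : C(ι → Bool, ℝ) :=
  ⟨fun x => v (fun k => x (i k)), (continuous_of_discreteTopology (f := v)).comp (by fun_prop)⟩

theorem Gfun_continuous {m : ℕ} (i : Fin m → ι) :
    Continuous fun v : (Fin m → Bool) → ℝ => Gfun v i := by
  have : LipschitzWith 1 fun v : (Fin m → Bool) → ℝ => Gfun v i := by
    refine LipschitzWith.of_dist_le_mul fun v w => ?_
    simp only [NNReal.coe_one, one_mul]
    rw [ContinuousMap.dist_le dist_nonneg]
    intro x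
    exact dist_le_pi_dist v w _
  exact this.continuous

theorem kunen_main [Nonempty ι] (hκ : IsKunen ι) (hT : ∀ x, Measurable fun f => T f x)
    {U : Set C(ι → Bool, ℝ)} (hU : IsOpen U) : MeasurableSet (T ⁻¹' U) := by
  classical
  obtain ⟨e, he⟩ := kunen_sep_s2 hκ
  obtain ⟨d, hd⟩ := kunen_dense he
  obtain ⟨t, ht, hcov⟩ := exists_coords hT he
  letI : MeasurableSpace C(ι → Bool, ℝ) := borel _
  haveI : BorelSpace C(ι → Bool, ℝ) := ⟨rfl⟩
  suffices H : Measurable T from H hU.measurableSet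
  let p : ∀ m : ℕ, (Fin m → Bool) → X → ℕ → Prop := fun m a f l =>
    (∀ k : Fin m, d l (t k f) = a k) ∨ ¬ ∃ l, ∀ k : Fin m, d l (t k f) = a k
  have hp : ∀ m a f, ∃ l, p m a f l := by
    intro m a f
    by_cases h : ∃ l, ∀ k : Fin m, d l (t k f) = a k
    · obtain ⟨l, hl⟩ := h
      exact ⟨l, Or.inl hl⟩
    · exact ⟨0, Or.inr h⟩
  have hpm : ∀ m (a : Fin m → Bool) l, MeasurableSet {f | ∀ k : Fin m, d l (t k f) = a k} := by
    intro m a l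
    rw [ofPred_forall]
    exact MeasurableSet.iInter fun k => ht k {i | d l i = a k}
  let L : ∀ m : ℕ, (Fin m → Bool) → X → ℕ := fun m a f => Nat.find (hp m a f)
  have hL : ∀ m a, Measurable (L m a) := by
    intro m a
    refine measurable_find _ fun l => ?_
    have h3 : {f | p m a f l} = {f | ∀ k : Fin m, d l (t k f) = a k} ∪
        (⋃ l, {f | ∀ k : Fin m, d l (t k f) = a k})ᶜ := by
      ext f
      simp [p]
    rw [h3]
    exact (hpm m a l).union (MeasurableSet.iUnion fun l => hpm m a l).compl
  let v : ∀ m : ℕ, X → (Fin m → Bool) → ℝ := fun m f a => T f (d (L m a f))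
  have hv : ∀ m, Measurable (v m) := by
    intro m
    refine measurable_pi_lambda _ fun a => ?_
    have : Measurable fun q : X × ℕ => T q.1 (d q.2) :=
      measurable_from_prod_countable_left fun l => hT (d l)
    exact this.comp (measurable_id.prodMk (hL m a))
  let H : ℕ → X → C(ι → Bool, ℝ) := fun m f => Gfun (v m f) (fun k : Fin m => t k f)
  have hH : ∀ m, Measurable (H m) := by
    intro m
    letI : MeasurableSpace (Fin m → ι) := ⊤
    have h1 : Measurable (Function.uncurry fun (v : (Fin m → Bool) → ℝ) (i : Fin m → ι) => Gfun v i) :=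
      measurable_uncurry_of_continuous_of_measurable (fun i => Gfun_continuous i)
        (fun v => measurable_from_top)
    have h2 : Measurable fun f => fun k : Fin m => t k f := fun S _ => kunen_tuple hκ ht m S
    exact h1.comp ((hv m).prodMk h2)
  refine measurable_of_tendsto_metrizable hH (tendsto_pi_nhds.2 fun f => ?_)
  rw [Metric.tendsto_atTop]
  intro ε hε
  obtain ⟨F, hF⟩ := modulus (T f) (half_pos hε)
  have hN : ∃ N : ℕ, ∀ i ∈ F, ¬ SmallOsc {i} 0 (T f) → ∃ k < N, t k f = i := by
    have : ∀ i, ∃ n, ¬ SmallOsc {i} 0 (T f) → ∃ k < n, t k f = i := by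
      intro i
      by_cases h : SmallOsc {i} 0 (T f)
      · exact ⟨0, fun h' => (h' h).elim⟩
      · obtain ⟨k, hk⟩ := hcov f i h
        exact ⟨k + 1, fun _ => ⟨k, by omega, hk⟩⟩
    choose n hn using this
    refine ⟨F.sup n, fun i hi h => ?_⟩
    obtain ⟨k, hk, hk'⟩ := hn i h
    exact ⟨k, hk.trans_le (Finset.le_sup hi), hk'⟩
  obtain ⟨N, hN⟩ := hN
  refine ⟨N, fun m hm => ?_⟩
  refine lt_of_le_of_lt ?_ (half_lt_self hε)
  rw [ContinuousMap.dist_le (half_pos hε).le]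
  intro x
  have hex : ∃ l, ∀ k : Fin m, d l (t k f) = x (t k f) := by
    obtain ⟨l, hl⟩ := hd x (Finset.univ.image fun k : Fin m => t k f)
    exact ⟨l, fun k => hl _ (by simp)⟩
  have hspec : ∀ k : Fin m, d (L m (fun k : Fin m => x (t k f)) f) (t k f) = x (t k f) := by
    rcases Nat.find_spec (hp m (fun k : Fin m => x (t k f)) f) with h | h
    · exact h
    · exact (h hex).elim
  change dist (T f (d (L m (fun k : Fin m => x (t k f)) f))) (T f x) ≤ ε / 2
  set y := d (L m (fun k : Fin m => x (t k f)) f) with hy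
  let F0 := F.filter fun i => SmallOsc {i} 0 (T f)
  have hs : SmallOsc (F0 : Set ι) 0 (T f) := SmallOsc.finite F0 fun i hi => (Finset.mem_filter.1 hi).2
  have h1 := hs y ((F0 : Set ι).piecewise x y) (fun i hi => by simp only [hi, not_false_eq_true, piecewise_eq_of_notMem])
  have h2 := hF ((F0 : Set ι).piecewise x y) x (fun i hi => by
    by_cases h : SmallOsc {i} 0 (T f)
    · have : i ∈ (F0 : Set ι) := Finset.mem_coe.2 (Finset.mem_filter.2 ⟨hi, h⟩)
      simp only [this, piecewise_eq_of_mem]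
    · have : i ∉ (F0 : Set ι) := fun hh => h (Finset.mem_filter.1 (Finset.mem_coe.1 hh)).2
      simp only [this, not_false_eq_true, piecewise_eq_of_notMem]
      obtain ⟨k, hk, rfl⟩ := hN i hi h
      exact hspec ⟨k, hk.trans_le hm⟩)
  rw [Real.dist_eq]
  have h3 := abs_sub_le (T f y) (T f ((F0 : Set ι).piecewise x y)) (T f x)
  linarith

theorem kunen_main' (hκ : IsKunen ι) (hT : ∀ x, Measurable fun f => T f x)
    {U : Set C(ι → Bool, ℝ)} (hU : IsOpen U) : MeasurableSet (T ⁻¹' U) := by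
  cases isEmpty_or_nonempty ι with
  | inr h => exact kunen_main hκ hT hU
  | inl h =>
    have hc : Continuous fun r : ℝ => ContinuousMap.const (ι → Bool) r := by fun_prop
    have : T ⁻¹' U = (fun f => T f (fun _ => true)) ⁻¹'
        ((fun r : ℝ => ContinuousMap.const (ι → Bool) r) ⁻¹' U) := by
      ext f
      have : ContinuousMap.const (ι → Bool) (T f (fun _ => true)) = T f := by
        ext x
        simp [Subsingleton.elim x (fun _ => true)]
      simp [this]
    rw [this]
    exact hT _ (hU.preimage hc).measurableSet

end

/-- If `K` is compact Hausdorff, `κ = |ι|` is a Kunen cardinal and there is a continuous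
surjection from `2^κ` onto `K`, then `Ba(C_p(K)) = Bo(C(K))`. -/
theorem stmt2 (ι : Type*) (K : Type*) [TopologicalSpace K] [CompactSpace K] [T2Space K]
    (hκ : IsKunen ι) (hsurj : ∃ q : C(ι → Bool, K), Function.Surjective q) :
    BaCp K = borel C(K, ℝ) := by
  obtain ⟨q, hq⟩ := hsurj
  apply le_antisymm
  · refine iSup_le fun t => ?_
    letI : MeasurableSpace C(K, ℝ) := borel _
    haveI : BorelSpace C(K, ℝ) := ⟨rfl⟩
    exact Measurable.comap_le (by fun_prop : Continuous fun f : C(K, ℝ) => f t).measurable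
  · letI : MeasurableSpace C(K, ℝ) := BaCp K
    refine MeasurableSpace.generateFrom_le fun U hU => ?_
    have hemb : Isometry fun f : C(K, ℝ) => f.comp q := by
      refine Isometry.of_dist_eq fun f g => le_antisymm ?_ ?_
      · rw [ContinuousMap.dist_le dist_nonneg]
        exact fun x => ContinuousMap.dist_apply_le_dist (q x)
      · rw [ContinuousMap.dist_le dist_nonneg]
        intro y
        obtain ⟨x, rfl⟩ := hq y
        exact ContinuousMap.dist_apply_le_dist (f := f.comp q) (g := g.comp q) x
    obtain ⟨V, hV, rfl⟩ := hemb.isEmbedding.isInducing.isOpen_iff.1 hU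
    refine kunen_main' (T := fun f : C(K, ℝ) => f.comp q) hκ (fun x => ?_) hV
    refine Measurable.mono (ma := MeasurableSpace.comap (fun f : C(K, ℝ) => f (q x))
      Real.measurableSpace) (comap_measurable _) ?_ le_rfl
    exact le_iSup (fun t : K => MeasurableSpace.comap (fun f : C(K, ℝ) => f t)
      Real.measurableSpace) (q x)
end

section
/- Let Γ be a set whose cardinality |Γ| is a Kunen cardinal. Then Ba(ℓ¹(Γ)_w) = Bo(ℓ¹(Γ)), i.e. the σ-algebra on ℓ¹(Γ) generated by all continuous linear functionals coincides with the Borel σ-algebra of the norm topology. -/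
/-- The Baire σ-algebra of the weak topology of a normed space `X`: the σ-algebra
generated by all continuous linear functionals on `X`. -/
def BaW (X : Type*) [NormedAddCommGroup X] [NormedSpace ℝ X] : MeasurableSpace X :=
  ⨆ φ : X →L[ℝ] ℝ, MeasurableSpace.comap φ Real.measurableSpace

open MeasureTheory Filter Topology

theorem k_sep {Γ : Type*} {S : Set (Γ × Γ)} (hS : MeasurableSet[productSigma Γ] S) :
    ∃ f : Γ → (ℕ → Prop), ∀ a b a' b', f a = f a' → f b = f b' → ((a, b) ∈ S ↔ (a', b') ∈ S) := by
  induction S, hS using MeasurableSpace.generateFrom_induction with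
  | hC t ht _ =>
    obtain ⟨A, B, rfl⟩ := ht
    refine ⟨fun a n => if n = 0 then a ∈ A else a ∈ B, ?_⟩
    intro a b a' b' h1 h2
    have := congrFun h1 0
    have := congrFun h2 1
    simp_all
  | empty => exact ⟨fun _ _ => True, by simp⟩
  | compl t _ ih =>
    obtain ⟨f, hf⟩ := ih
    exact ⟨f, fun a b a' b' h1 h2 => not_congr (hf a b a' b' h1 h2)⟩
  | iUnion s _ ih =>
    choose f hf using ih
    refine ⟨fun a n => f n.unpair.1 a n.unpair.2, ?_⟩
    intro a b a' b' h1 h2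
    simp only [Set.mem_iUnion]
    refine exists_congr fun n => hf n a b a' b' ?_ ?_
    · funext k
      simpa using congrFun h1 (Nat.pair n k)
    · funext k
      simpa using congrFun h2 (Nat.pair n k)

theorem k_inj {Γ : Type*} (h : IsKunen Γ) : ∃ f : Γ → (ℕ → Prop), Function.Injective f := by
  have hS : MeasurableSet[productSigma Γ] (Set.diagonal Γ) := by
    rw [show productSigma Γ = ⊤ from h]; trivial
  obtain ⟨f, hf⟩ := k_sep hS
  refine ⟨f, fun a b hab => ?_⟩
  have := hf a a a b rfl hab
  simpa using this

theorem k_prod {Γ : Type*} [MeasurableSpace Γ] [DiscreteMeasurableSpace Γ] (h : IsKunen Γ)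
    (S : Set (Γ × Γ)) : MeasurableSet S := by
  have hS : MeasurableSet[productSigma Γ] S := by
    rw [show productSigma Γ = ⊤ from h]; trivial
  have : productSigma Γ ≤ (inferInstance : MeasurableSpace (Γ × Γ)) := by
    refine MeasurableSpace.generateFrom_le ?_
    rintro _ ⟨A, B, rfl⟩
    exact (MeasurableSet.of_discrete).prod (MeasurableSet.of_discrete)
  exact this _ hS

theorem k_pow {Γ : Type*} [MeasurableSpace Γ] [DiscreteMeasurableSpace Γ] (h : IsKunen Γ)
    (n : ℕ) (S : Set (Fin n → Γ)) : MeasurableSet S := by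
  cases finite_or_infinite Γ with
  | inl _ => exact (Set.toFinite S).measurableSet
  | inr _ =>
  induction n with
  | zero => exact (Set.toFinite S).measurableSet
  | succ n ih =>
    have hc : Cardinal.mk (Fin n → Γ) ≤ Cardinal.mk Γ := by
      have := Cardinal.power_nat_le (c := Cardinal.mk Γ) (n := n) (Cardinal.aleph0_le_mk Γ)
      simpa using this
    obtain ⟨j⟩ := hc
    have hj : Measurable (j : (Fin n → Γ) → Γ) := fun t _ => ih _
    let φ : (Fin (n+1) → Γ) → Γ × Γ := fun g => (g 0, j (Fin.tail g))
    have hφ : Measurable φ := by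
      refine (measurable_pi_apply 0).prodMk (hj.comp ?_)
      exact measurable_pi_lambda _ fun i => measurable_pi_apply _
    have hinj : Function.Injective φ := by
      intro a b hab
      simp only [φ, Prod.mk.injEq] at hab
      have h2 := j.injective hab.2
      rw [← Fin.cons_self_tail a, ← Fin.cons_self_tail b, hab.1, h2]
    rw [← hinj.preimage_image S]
    exact hφ (k_prod h _)

section
open Classical

/-- cells -/
def kcell {Γ : Type*} (e : Γ → ℕ → Prop) (n : ℕ) (c : Fin n → Prop) : Set Γ :=
  {γ | ∀ i : Fin n, e γ i = c i}

theorem k_tendsto {Γ : Type*} (e : Γ → ℕ → Prop) (he : Function.Injective e) (x : Γ → ℝ)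
    (hx : Summable fun γ => |x γ|) (γ : Γ) :
    Tendsto (fun n => ∑' δ, (kcell e n (fun i => e γ i)).indicator x δ) atTop (𝓝 (x γ)) := by
  have h1 : x γ = ∑' δ, ({γ} : Set Γ).indicator x δ := by
    rw [tsum_eq_single γ]
    · simp
    · intro b hb; simp [hb]
  rw [h1]
  refine tendsto_tsum_of_dominated_convergence hx ?_ ?_
  · intro δ
    by_cases hd : δ = γ
    · subst hd
      refine tendsto_const_nhds.congr fun n => ?_
      simp [kcell]
    · have : ∃ k, e δ k ≠ e γ k := by
        by_contra! hh
        exact hd (he (funext hh))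
      obtain ⟨k, hk⟩ := this
      refine tendsto_const_nhds.congr' ?_
      filter_upwards [eventually_gt_atTop k] with n hn
      rw [Set.indicator_of_notMem (by simpa using hd), Set.indicator_of_notMem]
      intro hmem
      exact hk (hmem ⟨k, hn⟩)
  · refine Eventually.of_forall fun n δ => ?_
    simp only [Set.indicator]
    split_ifs <;> simp

theorem k_joint {Γ Y : Type*} [MeasurableSpace Γ] [DiscreteMeasurableSpace Γ] [MeasurableSpace Y]
    (e : Γ → ℕ → Prop) (he : Function.Injective e) (p : Y → Γ → ℝ)
    (hs : ∀ y, Summable fun γ => |p y γ|)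
    (hp : ∀ B : Set Γ, Measurable fun y => ∑' γ, B.indicator (p y) γ) :
    Measurable fun z : Y × Γ => p z.1 z.2 := by
  refine measurable_of_tendsto_metrizable
    (f := fun n (z : Y × Γ) => ∑' δ, (kcell e n (fun i => e z.2 i)).indicator (p z.1) δ) ?_ ?_
  · intro n
    have : Measurable fun w : Y × (Fin n → Prop) => ∑' δ, (kcell e n w.2).indicator (p w.1) δ :=
      measurable_from_prod_countable_left fun c => hp (kcell e n c)
    have h2 : Measurable fun z : Y × Γ => (z.1, (fun i : Fin n => e z.2 i)) :=
      measurable_fst.prodMk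
        ((Measurable.of_discrete (f := fun γ : Γ => fun i : Fin n => e γ i)).comp measurable_snd)
    exact this.comp h2
  · rw [tendsto_pi_nhds]
    exact fun z => k_tendsto e he _ (hs _) _

theorem k_abs {Γ Y : Type*} [MeasurableSpace Y]
    (e : Γ → ℕ → Prop) (he : Function.Injective e) (p : Y → Γ → ℝ)
    (hs : ∀ y, Summable fun γ => |p y γ|)
    (hp : ∀ B : Set Γ, Measurable fun y => ∑' γ, B.indicator (p y) γ) (B : Set Γ) :
    Measurable fun y => ∑' γ, B.indicator (fun δ => |p y δ|) γ := by
  let s : ∀ n, Y → (Fin n → Prop) → ℝ := fun n y c =>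
    if 0 < ∑' δ, (kcell e n c).indicator (p y) δ then 1 else -1
  have hsm : ∀ n c, Measurable fun y => s n y c := fun n c =>
    Measurable.ite (measurableSet_lt measurable_const (hp _)) measurable_const measurable_const
  refine measurable_of_tendsto_metrizable
    (f := fun n y => ∑' γ, B.indicator (fun δ => s n y (fun i => e δ i) * p y δ) γ) ?_ ?_
  · intro n
    have : (fun y => ∑' γ, B.indicator (fun δ => s n y (fun i => e δ i) * p y δ) γ) =
        fun y => ∑ c : Fin n → Prop, s n y c * ∑' γ, (B ∩ kcell e n c).indicator (p y) γ := by
      funext y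
      simp_rw [← tsum_mul_left]
      rw [← Summable.tsum_finsetSum]
      · congr 1
        funext γ
        refine Eq.symm ((Finset.sum_eq_single (fun i : Fin n => e γ i) ?_ ?_).trans ?_)
        · intro c _ hc
          rw [Set.indicator_of_notMem, mul_zero]
          rintro ⟨-, h2⟩
          exact hc (funext fun i => (h2 i).symm)
        · simp
        · have hk : γ ∈ kcell e n (fun i => e γ i) := fun i => rfl
          by_cases hB : γ ∈ B <;> simp [hB, hk]
      · intro c _
        exact ((hs y).of_abs.indicator _).mul_left _
    rw [this]
    exact Finset.measurable_sum _ fun c _ => (hsm n c).mul (hp _)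
  · rw [tendsto_pi_nhds]
    intro y
    refine tendsto_tsum_of_dominated_convergence (hs y) ?_ ?_
    · intro γ
      by_cases hB : γ ∈ B
      · simp only [Set.indicator_of_mem hB]
        have ht := k_tendsto e he (p y) (hs y) γ
        refine tendsto_const_nhds.congr' ?_
        rcases lt_trichotomy (p y γ) 0 with h0 | h0 | h0
        · filter_upwards [ht.eventually (gt_mem_nhds h0)] with n hn
          simp only [s]
          rw [if_neg (not_lt.2 hn.le), abs_of_neg h0]; ring
        · simp [h0]
        · filter_upwards [ht.eventually (lt_mem_nhds h0)] with n hn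
          simp only [s]
          rw [if_pos hn, abs_of_pos h0]; ring
      · simp [hB]
    · refine Eventually.of_forall fun n γ => ?_
      have h1 : ∀ c, |s n y c| = 1 := fun c => by
        simp only [s]
        split_ifs <;> simp
      by_cases hB : γ ∈ B <;> simp [hB, h1]

end

theorem k_proj {Γ Y : Type*} [MeasurableSpace Γ] [DiscreteMeasurableSpace Γ] [MeasurableSpace Y]
    (e : Γ → ℕ → Prop) (he : Function.Injective e) (p : Y → Γ → ℝ)
    (hs : ∀ y, Summable fun γ => |p y γ|)
    (hp : ∀ B : Set Γ, Measurable fun y => ∑' γ, B.indicator (p y) γ)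
    (S : Set (Y × Γ)) (hS : MeasurableSet S) (hS0 : ∀ z ∈ S, p z.1 z.2 ≠ 0) :
    MeasurableSet {y | ∃ γ, (y, γ) ∈ S} := by
  let N : Y → ℝ := fun y => 1 + ∑' γ, |p y γ|
  have hN0 : ∀ y, 0 < N y := fun y => by
    have : 0 ≤ ∑' γ, |p y γ| := tsum_nonneg fun _ => abs_nonneg _
    simp only [N]; linarith
  have hN : Measurable N := by
    have := k_abs e he p hs hp Set.univ
    simp only [Set.indicator_univ] at this
    exact measurable_const.add this
  let μ : Y → Measure Γ := fun y =>
    Measure.sum fun γ => ENNReal.ofReal (|p y γ| / N y) • Measure.dirac γ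
  have hμ : ∀ y B, μ y B = ENNReal.ofReal ((∑' γ, B.indicator (fun δ => |p y δ|) γ) / N y) := by
    intro y B
    rw [← tsum_div_const, ENNReal.ofReal_tsum_of_nonneg]
    · rw [Measure.sum_apply _ .of_discrete]
      congr 1
      funext γ
      by_cases hB : γ ∈ B <;> simp [hB]
    · intro γ
      exact div_nonneg (Set.indicator_nonneg (fun _ _ => abs_nonneg _) _) (hN0 y).le
    · exact ((hs y).indicator _).div_const _
  let κ : ProbabilityTheory.Kernel Y Γ := ⟨μ, by
    refine Measure.measurable_of_measurable_coe _ fun B _ => ?_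
    simp_rw [hμ]
    exact ((k_abs e he p hs hp B).div hN).ennreal_ofReal⟩
  have : ProbabilityTheory.IsFiniteKernel κ := ⟨1, by simp, fun y => by
    change μ y Set.univ ≤ 1
    rw [hμ, ENNReal.ofReal_le_one, div_le_one (hN0 y)]
    simp [N]⟩
  have hm := ProbabilityTheory.Kernel.measurable_kernel_prodMk_left (κ := κ) hS
  have heq : {y | ∃ γ, (y, γ) ∈ S} = {y | κ y (Prod.mk y ⁻¹' S) ≠ 0} := by
    ext y
    change (∃ γ, (y, γ) ∈ S) ↔ μ y (Prod.mk y ⁻¹' S) ≠ 0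
    rw [Measure.sum_apply _ .of_discrete, Ne, ENNReal.tsum_eq_zero, not_forall]
    refine exists_congr fun γ => ?_
    by_cases hB : (y, γ) ∈ S
    · have := hS0 _ hB
      simp only [hB, true_iff]
      simp [hB]
      exact div_pos (abs_pos.2 this) (hN0 y)
    · simp [hB]
  rw [heq]
  exact (hm (measurableSet_singleton 0)).compl

theorem k_projn {Γ Y : Type*} [MeasurableSpace Γ] [DiscreteMeasurableSpace Γ] [MeasurableSpace Y]
    (e : Γ → ℕ → Prop) (he : Function.Injective e) (p : Y → Γ → ℝ)
    (hs : ∀ y, Summable fun γ => |p y γ|)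
    (hp : ∀ B : Set Γ, Measurable fun y => ∑' γ, B.indicator (p y) γ) (n : ℕ)
    (S : Set (Y × (Fin n → Γ))) (hS : MeasurableSet S) (hS0 : ∀ z ∈ S, ∀ i, p z.1 (z.2 i) ≠ 0) :
    MeasurableSet {y | ∃ g, (y, g) ∈ S} := by
  induction n with
  | zero =>
    have : {y | ∃ g, (y, g) ∈ S} = (fun y => (y, (Fin.elim0 : Fin 0 → Γ))) ⁻¹' S := by
      ext y
      refine ⟨fun ⟨g, hg⟩ => ?_, fun h => ⟨_, h⟩⟩
      rwa [Subsingleton.elim g Fin.elim0] at hg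
    rw [this]
    exact (measurable_id.prodMk measurable_const) hS
  | succ n ih =>
    let T : Set ((Y × (Fin n → Γ)) × Γ) :=
      (fun w => (w.1.1, (Fin.cons w.2 w.1.2 : Fin (n+1) → Γ))) ⁻¹' S
    have hT : MeasurableSet T := by
      refine Measurable.prodMk (measurable_fst.comp measurable_fst) ?_ hS
      refine measurable_pi_lambda _ fun i => ?_
      refine Fin.cases ?_ (fun i => ?_) i
      · simpa using measurable_snd
      · simp only [Fin.cons_succ]
        exact (measurable_pi_apply i).comp (measurable_snd.comp measurable_fst)
    have h1 := k_proj e he (fun w : Y × (Fin n → Γ) => p w.1) (fun _ => hs _)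
      (fun B => (hp B).comp measurable_fst) T hT (fun z hz => by
        simpa using hS0 _ hz 0)
    have h2 := ih _ h1 (by
      rintro ⟨y, g⟩ ⟨γ, hγ⟩ i
      simpa using hS0 _ hγ i.succ)
    convert h2 using 1
    ext y
    constructor
    · rintro ⟨g, hg⟩
      refine ⟨Fin.tail g, g 0, ?_⟩
      simpa [T] using hg
    · rintro ⟨g, γ, hg⟩
      exact ⟨_, hg⟩

theorem k_lp_summable {Γ : Type*} (x : lp (fun _ : Γ => ℝ) 1) : Summable fun γ => |x γ| := by
  simpa using (lp.memℓp x).summable (by norm_num)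

theorem k_lp_norm {Γ : Type*} (x : lp (fun _ : Γ => ℝ) 1) : ‖x‖ = ∑' γ, |x γ| := by
  simpa using lp.norm_eq_tsum_rpow (by norm_num) x

theorem k_lp_meas {Γ : Type*} (B : Set Γ) :
    Measurable[BaW (lp (fun _ : Γ => ℝ) 1)] fun x : lp (fun _ : Γ => ℝ) 1 =>
      ∑' γ, B.indicator (x : Γ → ℝ) γ := by
  let L : lp (fun _ : Γ => ℝ) 1 →ₗ[ℝ] ℝ :=
    { toFun := fun x => ∑' γ, B.indicator (x : Γ → ℝ) γ
      map_add' := fun x y => by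
        rw [← Summable.tsum_add ((k_lp_summable x).of_abs.indicator _)
          ((k_lp_summable y).of_abs.indicator _)]
        congr 1; funext γ
        by_cases hB : γ ∈ B
        · simp only [Set.indicator_of_mem hB]; rfl
        · simp only [Set.indicator_of_notMem hB, add_zero]
      map_smul' := fun c x => by
        simp only [RingHom.id_apply, smul_eq_mul]
        rw [← tsum_mul_left]
        congr 1; funext γ
        by_cases hB : γ ∈ B <;> simp [hB] }
  let φ : lp (fun _ : Γ => ℝ) 1 →L[ℝ] ℝ := L.mkContinuous 1 fun x => by
    rw [one_mul, k_lp_norm]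
    refine tsum_of_norm_bounded (k_lp_summable x).hasSum fun γ => ?_
    by_cases hB : γ ∈ B <;> simp [hB]
  have h1 : MeasurableSpace.comap φ Real.measurableSpace ≤ BaW (lp (fun _ : Γ => ℝ) 1) :=
    le_iSup (fun φ : lp (fun _ : Γ => ℝ) 1 →L[ℝ] ℝ =>
      MeasurableSpace.comap φ Real.measurableSpace) φ
  exact measurable_iff_comap_le.2 h1

theorem k_est {Γ : Type*} (x y : lp (fun _ : Γ => ℝ) 1) (F : Finset Γ) :
    ‖x - y‖ ≤ 2 * ∑ γ ∈ F, |x γ - y γ| + 2 * (‖x‖ - ∑ γ ∈ F, |x γ|) + (‖y‖ - ‖x‖) := by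
  have hx := k_lp_summable x
  have hy := k_lp_summable y
  have hxy : Summable fun γ => |x γ - y γ| := by simpa using k_lp_summable (x - y)
  have hn : ‖x - y‖ = ∑' γ, |x γ - y γ| := by simpa using k_lp_norm (x - y)
  have h := ((hx.add hy).sub hxy).sum_le_tsum F (fun γ _ => by
    have := abs_sub (x γ) (y γ); linarith)
  rw [(hx.add hy).tsum_sub hxy, hx.tsum_add hy, ← hn, ← k_lp_norm, ← k_lp_norm,
    Finset.sum_sub_distrib, Finset.sum_add_distrib] at h
  have h2 : ∑ γ ∈ F, |x γ| ≤ ∑ γ ∈ F, |x γ - y γ| + ∑ γ ∈ F, |y γ| := by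
    rw [← Finset.sum_add_distrib]
    refine Finset.sum_le_sum fun γ _ => ?_
    have := abs_add_le (x γ - y γ) (y γ)
    simpa using this
  linarith

theorem k_open {Γ : Type*} (U : Set (lp (fun _ : Γ => ℝ) 1)) (hU : IsOpen U)
    (x : lp (fun _ : Γ => ℝ) 1) (hx : x ∈ U) :
    ∃ (n : ℕ) (q : Fin n → ℚ × ℚ) (s : ℚ) (g : Fin n → Γ),
      (‖x‖ < s ∧ ∀ i, x (g i) ≠ 0 ∧ (q i).1 < x (g i) ∧ x (g i) < (q i).2) ∧
      ∀ y : lp (fun _ : Γ => ℝ) 1,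
        (‖y‖ < s ∧ ∀ i, y (g i) ≠ 0 ∧ (q i).1 < y (g i) ∧ y (g i) < (q i).2) → y ∈ U := by
  obtain ⟨ε, hε, hb⟩ := Metric.isOpen_iff.1 hU x hx
  obtain ⟨δ, hδ, hδε⟩ : ∃ δ : ℝ, 0 < δ ∧ 5 * δ = ε := ⟨ε / 5, by positivity, by ring⟩
  obtain ⟨F₀, hF₀⟩ := ((k_lp_summable x).hasSum.eventually
    (lt_mem_nhds (sub_lt_self _ hδ))).exists
  rw [← k_lp_norm] at hF₀
  let F := F₀.filter fun γ => x γ ≠ 0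
  have hF : ‖x‖ - δ < ∑ γ ∈ F, |x γ| := by
    refine hF₀.trans_eq ?_
    rw [Finset.sum_filter]
    refine Finset.sum_congr rfl fun γ _ => ?_
    by_cases h0 : x γ = 0 <;> simp [h0]
  let n := F.card
  let g : Fin n → Γ := fun i => (F.equivFin.symm i : Γ)
  have hg : ∀ i, g i ∈ F := fun i => (F.equivFin.symm i).2
  have hgs : ∀ f : Γ → ℝ, ∑ γ ∈ F, f γ = ∑ i, f (g i) := fun f => by
    rw [← Finset.sum_coe_sort]
    exact (Equiv.sum_comp F.equivFin.symm (fun γ : F => f γ)).symm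
  have hr : 0 < δ / (n + 1) := by positivity
  obtain ⟨s, hs1, hs2⟩ := exists_rat_btwn (show ‖x‖ < ‖x‖ + δ by linarith)
  have h1 : ∀ i, ∃ q : ℚ, x (g i) - δ / (n + 1) / 2 < q ∧ (q : ℝ) < x (g i) := fun i =>
    exists_rat_btwn (by linarith)
  have h2 : ∀ i, ∃ q : ℚ, x (g i) < q ∧ (q : ℝ) < x (g i) + δ / (n + 1) / 2 := fun i =>
    exists_rat_btwn (by linarith)
  choose a ha using h1
  choose b hb' using h2
  refine ⟨n, fun i => (a i, b i), s, g, ⟨hs1, fun i => ⟨(Finset.mem_filter.1 (hg i)).2,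
    (ha i).2, (hb' i).1⟩⟩, ?_⟩
  rintro y ⟨hy1, hy2⟩
  apply hb
  rw [Metric.mem_ball, dist_comm, dist_eq_norm]
  have he := k_est x y F
  have hsum : ∑ γ ∈ F, |x γ - y γ| ≤ δ := by
    rw [hgs]
    calc ∑ i, |x (g i) - y (g i)| ≤ ∑ i : Fin n, δ / (n + 1) := by
          refine Finset.sum_le_sum fun i _ => ?_
          obtain ⟨-, h3, h4⟩ := hy2 i
          have h5 := ha i
          have h6 := hb' i
          simp only at h3 h4
          rw [abs_le]
          constructor <;> linarith
      _ = n * (δ / (n + 1)) := by simp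
      _ ≤ δ := by
          rw [← mul_div_assoc, div_le_iff₀ (by positivity)]
          nlinarith
  linarith

theorem k_main {Γ : Type*} [MeasurableSpace Γ] [DiscreteMeasurableSpace Γ] (h : IsKunen Γ)
    (m : MeasurableSpace (lp (fun _ : Γ => ℝ) 1))
    (hp : ∀ B : Set Γ, Measurable fun x : lp (fun _ : Γ => ℝ) 1 =>
      ∑' γ, B.indicator (x : Γ → ℝ) γ)
    (U : Set (lp (fun _ : Γ => ℝ) 1)) (hU : IsOpen U) : MeasurableSet U := by
  obtain ⟨e, he⟩ := k_inj h
  let p : lp (fun _ : Γ => ℝ) 1 → Γ → ℝ := fun x => x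
  have hs : ∀ y, Summable fun γ => |p y γ| := k_lp_summable
  have hN : Measurable fun x : lp (fun _ : Γ => ℝ) 1 => ‖x‖ := by
    have := k_abs e he p hs hp Set.univ
    simp only [Set.indicator_univ] at this
    simpa only [k_lp_norm] using this
  have hj := k_joint e he p hs hp
  let C : ∀ n : ℕ, (Fin n → ℚ × ℚ) → ℚ → (Fin n → Γ) → lp (fun _ : Γ => ℝ) 1 → Prop :=
    fun n q s g y => ‖y‖ < s ∧ ∀ i, p y (g i) ≠ 0 ∧ (q i).1 < p y (g i) ∧ p y (g i) < (q i).2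
  let V : ∀ n : ℕ, (Fin n → ℚ × ℚ) → ℚ → Set (lp (fun _ : Γ => ℝ) 1 × (Fin n → Γ)) :=
    fun n q s => {z | C n q s z.2 z.1} ∩ Prod.snd ⁻¹' {g | ∀ y, C n q s g y → y ∈ U}
  have hV : ∀ n q s, MeasurableSet (V n q s) := by
    intro n q s
    refine MeasurableSet.inter ?_ (measurable_snd (k_pow h n _))
    have hi : ∀ i : Fin n, Measurable fun z : lp (fun _ : Γ => ℝ) 1 × (Fin n → Γ) =>
        p z.1 (z.2 i) := fun i =>
      hj.comp (measurable_fst.prodMk ((measurable_pi_apply i).comp measurable_snd))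
    have hA : ∀ i : Fin n, MeasurableSet {z : lp (fun _ : Γ => ℝ) 1 × (Fin n → Γ) |
        p z.1 (z.2 i) ≠ 0 ∧ (q i).1 < p z.1 (z.2 i) ∧ p z.1 (z.2 i) < (q i).2} := fun i =>
      ((hi i) (measurableSet_singleton 0)).compl.inter
      ((measurableSet_lt measurable_const (hi i)).inter
        (measurableSet_lt (hi i) measurable_const))
    have hAll := (measurableSet_lt (hN.comp measurable_fst) (measurable_const (a := (s : ℝ)))).inter
      (MeasurableSet.iInter hA)
    convert hAll using 1
    ext z
    simp [C]
  have hUeq : U = ⋃ (n : ℕ) (q : Fin n → ℚ × ℚ) (s : ℚ), {y | ∃ g, (y, g) ∈ V n q s} := by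
    ext x
    simp only [Set.mem_iUnion]
    constructor
    · intro hx
      obtain ⟨n, q, s, g, h1, h2⟩ := k_open U hU x hx
      exact ⟨n, q, s, g, h1, h2⟩
    · rintro ⟨n, q, s, g, h1, h2⟩
      exact h2 x h1
  rw [hUeq]
  refine MeasurableSet.iUnion fun n => MeasurableSet.iUnion fun q => MeasurableSet.iUnion fun s =>
    k_projn e he p hs hp n _ (hV n q s) ?_
  rintro z ⟨hz, -⟩ i
  exact (hz.2 i).1

/-- (Fremlin) If `|Γ|` is a Kunen cardinal, then `Ba(ℓ¹(Γ)_w) = Bo(ℓ¹(Γ))`. -/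
theorem stmt4 (Γ : Type*) (h : IsKunen Γ) :
    BaW (lp (fun _ : Γ => ℝ) 1) = borel (lp (fun _ : Γ => ℝ) 1) := by
  apply le_antisymm
  · refine iSup_le fun φ => ?_
    rw [← measurable_iff_comap_le]
    let _ : MeasurableSpace (lp (fun _ : Γ => ℝ) 1) := borel _
    have : BorelSpace (lp (fun _ : Γ => ℝ) 1) := ⟨rfl⟩
    exact φ.continuous.measurable
  · refine MeasurableSpace.generateFrom_le fun U hU => ?_
    let _ : MeasurableSpace Γ := ⊤
    have : DiscreteMeasurableSpace Γ := ⟨fun _ => trivial⟩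
    exact k_main h _ k_lp_meas U hU
end

section
/- Let Γ be a set of cardinality ℵ₁. Then Ba(C_p(2^Γ)) = Bo(C(2^Γ)), i.e. the σ-algebra on C(2^Γ) generated by the evaluation maps coincides with the Borel σ-algebra of the supremum-norm topology. -/
open Set Filter Topology

theorem exists_tot {Γ : Type*} (h : Cardinal.mk Γ = Cardinal.aleph 1) :
    ∃ s : Γ → Γ → Prop, (∀ a b, s a b ∨ s b a) ∧ ∀ a, {b | s b a}.Countable := by
  obtain ⟨r, wo, hr⟩ := Cardinal.exists_ord_eq Γ
  refine ⟨fun a b => ¬ r b a, ?_, ?_⟩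
  · intro a b
    by_contra hc
    push Not at hc
    exact (asymm_of r hc.1 hc.2)
  · intro a
    have h1 : {b | r b a}.Countable := by
      have := Cardinal.card_typein_lt a hr
      rw [h] at this
      exact Cardinal.le_aleph0_iff_set_countable.1 (Cardinal.lt_aleph_one_iff.1 this)
    refine (h1.union (countable_singleton a)).mono ?_
    intro b hb
    rcases trichotomous_of r b a with h | h | h
    · exact Or.inl h
    · exact Or.inr h
    · exact absurd h hb

theorem exists_inj {Γ : Type*} (h : Cardinal.mk Γ ≤ Cardinal.aleph 1) :
    ∃ e : Γ → ℝ, Function.Injective e := by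
  have : Cardinal.lift.{0} (Cardinal.mk Γ) ≤ Cardinal.lift (Cardinal.mk ℝ) := by
    rw [Cardinal.mk_real, Cardinal.lift_continuum, Cardinal.lift_id']
    exact h.trans Cardinal.aleph_one_le_continuum
  obtain ⟨f⟩ := Cardinal.lift_mk_le'.1 this
  exact ⟨f, f.injective⟩

theorem exists_inj' {Γ : Type*} (h : Cardinal.mk Γ ≤ Cardinal.aleph 1) :
    ∃ e : Γ → ℕ → Bool, Function.Injective e := by
  have : Cardinal.lift.{0} (Cardinal.mk Γ) ≤ Cardinal.lift (Cardinal.mk (ℕ → Bool)) := by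
    have : Cardinal.mk (ℕ → Bool) = Cardinal.continuum := by simp
    rw [this, Cardinal.lift_continuum, Cardinal.lift_id']
    exact h.trans Cardinal.aleph_one_le_continuum
  obtain ⟨f⟩ := Cardinal.lift_mk_le'.1 this
  exact ⟨f, f.injective⟩

/-- graphs with countable sections -/
theorem kunen_aux {Ω X Y : Type*} [MeasurableSpace Ω] (e : Option Y → ℝ)
    (he : Function.Injective e)
    (u : Ω → X) (v : Ω → Y) (hu : ∀ A : Set X, MeasurableSet (u ⁻¹' A))
    (hv : ∀ A : Set Y, MeasurableSet (v ⁻¹' A)) (B : X → Y → Prop)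
    (hB : ∀ x, {y | B x y}.Countable) : MeasurableSet {w | B (u w) (v w)} := by
  have : ∀ x, ∃ g : ℕ → Option Y, insert none (some '' {y | B x y}) = range g := fun x =>
    (((hB x).image _).insert _).exists_eq_range (insert_nonempty _ _)
  choose g hg using this
  have : {w | B (u w) (v w)} = ⋃ n, {w | e (g (u w) n) = e (some (v w))} := by
    ext w
    have := Set.ext_iff.1 (hg (u w)) (some (v w))
    simp only [mem_insert_iff, reduceCtorEq, mem_image, mem_ofPred_eq, Option.some.injEq,
      exists_eq_right, false_or, mem_range] at this
    simp [he.eq_iff, this]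
  rw [this]
  refine MeasurableSet.iUnion fun n => measurableSet_eq_fun ?_ ?_
  · intro s _
    exact hu ((fun x => e (g x n)) ⁻¹' s)
  · intro s _
    exact hv ((fun y => e (some y)) ⁻¹' s)

theorem kunen {Ω X Y Γ : Type*} [MeasurableSpace Ω] (s : Γ → Γ → Prop)
    (hs : ∀ a b, s a b ∨ s b a) (hs' : ∀ a, {b | s b a}.Countable)
    (a : X → Γ) (ha : Function.Injective a) (b : Y → Γ) (hb : Function.Injective b)
    (e : Option X → ℝ) (he : Function.Injective e)
    (e' : Option Y → ℝ) (he' : Function.Injective e')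
    (u : Ω → X) (v : Ω → Y) (hu : ∀ A : Set X, MeasurableSet (u ⁻¹' A))
    (hv : ∀ A : Set Y, MeasurableSet (v ⁻¹' A)) (B : X → Y → Prop) :
    MeasurableSet {w | B (u w) (v w)} := by
  have h1 := kunen_aux e' he' u v hu hv (fun x y => B x y ∧ s (b y) (a x))
    (fun x => ((hs' (a x)).preimage hb).mono fun y hy => hy.2)
  have h2 := kunen_aux e he v u hv hu (fun y x => B x y ∧ s (a x) (b y))
    (fun y => ((hs' (b y)).preimage ha).mono fun y hy => hy.2)
  convert h1.union h2 using 1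
  ext w
  have := hs (a (u w)) (b (v w))
  simp only [mem_ofPred_eq, mem_union]
  tauto

theorem hit_aux {Γ : Type*} (e : Γ → ℝ) [Nonempty Γ] :
    ∃ m : Finset Γ → Γ, ∀ E : Finset Γ, E.Nonempty → m E ∈ E ∧ ∀ x ∈ E, e (m E) ≤ e x := by
  have : ∀ E : Finset Γ, ∃ y, E.Nonempty → y ∈ E ∧ ∀ x ∈ E, e y ≤ e x := by
    intro E
    by_cases h : E.Nonempty
    · obtain ⟨y, hy, h⟩ := E.exists_min_image e h
      exact ⟨y, fun _ => ⟨hy, h⟩⟩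
    · exact ⟨Classical.arbitrary _, fun h' => absurd h' h⟩
  choose m hm using this
  exact ⟨m, hm⟩

open Classical in
theorem hit {Ω Γ : Type*} [MeasurableSpace Ω] (h : Cardinal.mk Γ = Cardinal.aleph 1)
    (E : Ω → Finset Γ) (hE : ∀ A : Set Γ, MeasurableSet {w | ∃ x ∈ E w, x ∈ A})
    (B : Set (Finset Γ)) : MeasurableSet (E ⁻¹' B) := by
  have hinf : Infinite Γ := by
    rw [Cardinal.infinite_iff, h]; exact Cardinal.aleph0_le_aleph 1
  have hF : Cardinal.mk (Finset Γ) = Cardinal.mk Γ := Cardinal.mk_finset_of_infinite Γ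
  have hO : ∀ X : Type _, Cardinal.mk X = Cardinal.aleph 1 →
      Cardinal.mk (Option X) ≤ Cardinal.aleph 1 := by
    intro X hX
    rw [Cardinal.mk_option, hX]
    exact (Cardinal.add_one_eq (Cardinal.aleph0_le_aleph 1)).le
  obtain ⟨s, hs, hs'⟩ := exists_tot h
  obtain ⟨e, he⟩ := exists_inj h.le
  obtain ⟨e1, he1⟩ := exists_inj (hO Γ h)
  obtain ⟨e2, he2⟩ := exists_inj (hO (Finset Γ) (hF.trans h))
  obtain ⟨b⟩ : Nonempty (Finset Γ ↪ Γ) := hF.le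
  obtain ⟨m, hm⟩ := hit_aux e
  let R : ℕ → Finset Γ → Finset Γ := fun n => Nat.rec (fun _ => ∅)
    (fun _ r E => if E.Nonempty then insert (m E) (r (E.erase (m E))) else ∅) n
  have R1 : ∀ n E, R (n+1) E = if E.Nonempty then insert (m E) (R n (E.erase (m E))) else ∅ :=
    fun _ _ => rfl
  have hR : ∀ n E, E.card ≤ n → R n E = E := by
    intro n
    induction n with
    | zero => intro E hE; rw [Nat.le_zero, Finset.card_eq_zero] at hE; subst hE; rfl
    | succ n ih =>
      intro E hE
      rw [R1]
      split_ifs with h0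
      · rw [ih, Finset.insert_erase (hm E h0).1]
        rw [Finset.card_erase_of_mem (hm E h0).1]; omega
      · exact (Finset.not_nonempty_iff_eq_empty.1 h0).symm
  have hRm : ∀ n, ∀ E : Ω → Finset Γ, (∀ A : Set Γ, MeasurableSet {w | ∃ x ∈ E w, x ∈ A}) →
      ∀ B : Set (Finset Γ), MeasurableSet ((fun w => R n (E w)) ⁻¹' B) := by
    intro n
    induction n with
    | zero => intro E _ B; exact MeasurableSet.const (∅ ∈ B)
    | succ n ih =>
      intro E hE B
      have hne : MeasurableSet {w | (E w).Nonempty} := by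
        convert hE univ using 3 with w
        simp [Finset.Nonempty]
      have key : ∀ w, (E w).Nonempty → ∃ q : ℚ, e (m (E w)) < q ∧
          ∀ x ∈ E w, x ≠ m (E w) → (q : ℝ) ≤ e x := by
        intro w hw
        have hlt : ∀ x ∈ (E w).erase (m (E w)), e (m (E w)) < e x := by
          intro x hx
          rw [Finset.mem_erase] at hx
          exact lt_of_le_of_ne ((hm _ hw).2 x hx.2) fun hh => hx.1 (he hh.symm)
        rcases ((E w).erase (m (E w))).eq_empty_or_nonempty with h0 | h0
        · obtain ⟨q, hq⟩ := exists_rat_gt (e (m (E w)))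
          refine ⟨q, hq, fun x hx hne => ?_⟩
          have : x ∈ (E w).erase (m (E w)) := Finset.mem_erase.2 ⟨hne, hx⟩
          simp [h0] at this
        · obtain ⟨y, hy, hy'⟩ := Finset.exists_min_image _ e h0
          obtain ⟨q, hq, hq'⟩ := exists_rat_btwn (hlt y hy)
          exact ⟨q, hq, fun x hx hne => hq'.le.trans (hy' x (Finset.mem_erase.2 ⟨hne, hx⟩))⟩
      have hmm : ∀ A : Set Γ, MeasurableSet {w | (E w).Nonempty ∧ m (E w) ∈ A} := by
        intro A
        have : {w | (E w).Nonempty ∧ m (E w) ∈ A} = ⋃ q : ℚ,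
            ({w | ∃ x ∈ E w, x ∈ A ∩ {x | e x < q}} \ {w | ∃ x ∈ E w, x ∈ Aᶜ ∩ {x | e x < q}}) := by
          ext w
          simp only [mem_ofPred_eq, mem_iUnion, Set.mem_sdiff, mem_inter_iff, mem_compl_iff]
          constructor
          · rintro ⟨hw, hA⟩
            obtain ⟨q, h1, h2⟩ := key w hw
            refine ⟨q, ⟨_, (hm _ hw).1, hA, h1⟩, ?_⟩
            rintro ⟨x, hx, hxA, hxq⟩
            exact absurd (h2 x hx fun hh => hxA (hh ▸ hA)) (not_le.2 hxq)
          · rintro ⟨q, ⟨x, hx, hxA, hxq⟩, h2⟩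
            refine ⟨⟨x, hx⟩, ?_⟩
            by_contra hc
            exact h2 ⟨_, (hm _ ⟨x, hx⟩).1, hc, ((hm _ ⟨x, hx⟩).2 x hx).trans_lt hxq⟩
        rw [this]
        exact MeasurableSet.iUnion fun q => (hE _).diff (hE _)
      have hmm' : ∀ A : Set Γ, MeasurableSet ((fun w => m (E w)) ⁻¹' A) := by
        intro A
        have : (fun w => m (E w)) ⁻¹' A = {w | (E w).Nonempty ∧ m (E w) ∈ A} ∪
            ({w | (E w).Nonempty}ᶜ ∩ {w | m ∅ ∈ A}) := by
          ext w
          rcases (E w).eq_empty_or_nonempty with h0 | h0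
          · simp [h0]
          · simp [h0]
        rw [this]
        exact (hmm A).union (hne.compl.inter (MeasurableSet.const _))
      have hE' : ∀ A : Set Γ, MeasurableSet {w | ∃ x ∈ (E w).erase (m (E w)), x ∈ A} := by
        intro A
        have : {w | ∃ x ∈ (E w).erase (m (E w)), x ∈ A} = ⋃ q : ℚ,
            ({w | ∃ x ∈ E w, x ∈ {x | e x < q}} ∩ {w | ∃ x ∈ E w, x ∈ A ∩ {x | q ≤ e x}}) := by
          ext w
          simp only [mem_ofPred_eq, mem_iUnion, mem_inter_iff, Finset.mem_erase]
          constructor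
          · rintro ⟨x, ⟨hne, hx⟩, hA⟩
            obtain ⟨q, h1, h2⟩ := key w ⟨x, hx⟩
            exact ⟨q, ⟨_, (hm _ ⟨x, hx⟩).1, h1⟩, x, hx, hA, h2 x hx hne⟩
          · rintro ⟨q, ⟨y, hy, hyq⟩, x, hx, hxA, hxq⟩
            refine ⟨x, ⟨?_, hx⟩, hxA⟩
            rintro rfl
            exact absurd (((hm _ ⟨y, hy⟩).2 y hy).trans_lt hyq) (not_lt.2 hxq)
        rw [this]
        exact MeasurableSet.iUnion fun q => (hE _).inter (hE _)
      have := kunen s hs hs' id Function.injective_id b b.injective e1 he1 e2 he2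
        _ _ hmm' (ih _ hE') (fun x F => insert x F ∈ B)
      have h2 : (fun w => R (n+1) (E w)) ⁻¹' B = ({w | (E w).Nonempty} ∩
          {w | insert (m (E w)) (R n ((E w).erase (m (E w)))) ∈ B}) ∪
          ({w | (E w).Nonempty}ᶜ ∩ {w | ∅ ∈ B}) := by
        ext w
        simp only [mem_preimage, R1]
        by_cases h0 : (E w).Nonempty
        · simp [h0]
        · simp only [if_neg h0]; simp [h0]
      rw [h2]
      exact (hne.inter this).union (hne.compl.inter (MeasurableSet.const _))
  have : E ⁻¹' B = ⋃ N : ℕ, ⋂ n : ℕ, (fun w => R (N + n) (E w)) ⁻¹' B := by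
    ext w
    simp only [mem_preimage, mem_iUnion, mem_iInter]
    constructor
    · intro hw
      refine ⟨(E w).card, fun n => ?_⟩
      rwa [hR _ _ (by omega)]
    · rintro ⟨N, hN⟩
      have := hN (E w).card
      rwa [hR _ _ (by omega)] at this
  rw [this]
  exact MeasurableSet.iUnion fun N => MeasurableSet.iInter fun n => hRm _ _ hE _

theorem unif {Γ : Type*} (f : C(Γ → Bool, ℝ)) (δ : ℝ) (hδ : 0 < δ) :
    ∃ G : Finset Γ, ∀ x y : Γ → Bool, (∀ γ ∈ G, x γ = y γ) → |f x - f y| < δ := by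
  have h := CompactSpace.uniformContinuous_of_continuous f.continuous
  have h1 := h (Metric.dist_mem_uniformity hδ)
  have hb : uniformity (Γ → Bool) =
      ⨅ i : Γ, 𝓟 {p : (Γ → Bool) × (Γ → Bool) | p.1 i = p.2 i} := by
    rw [Pi.uniformity]
    congr 1
    ext1 i
    have : uniformity Bool = 𝓟 SetRel.id := rfl
    rw [this, comap_principal]
    rfl
  rw [hb, mem_map, (hasBasis_iInf_principal_finite _).mem_iff] at h1
  obtain ⟨t, ht, h1⟩ := h1
  refine ⟨ht.toFinset, fun x y hxy => ?_⟩
  have : (x, y) ∈ ⋂ i ∈ t, {p : (Γ → Bool) × (Γ → Bool) | p.1 i = p.2 i} := by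
    simp only [mem_iInter]
    intro i hi
    exact hxy i (by simpa using hi)
  exact h1 this

def rr {Γ : Type*} (e : Γ → ℕ → Bool) (j : ℕ) (γ : Γ) : Fin j → Bool := fun i => e γ i

theorem rr_sep {Γ : Type*} (e : Γ → ℕ → Bool) (he : Function.Injective e) (a b : Γ) (h : a ≠ b) :
    ∀ᶠ j in atTop, rr e j a ≠ rr e j b := by
  obtain ⟨i, hi⟩ := Function.ne_iff.1 (he.ne h)
  filter_upwards [eventually_gt_atTop i] with j hj hc
  exact hi (congrFun hc ⟨i, hj⟩)

theorem rr_inj {Γ : Type*} (e : Γ → ℕ → Bool) (he : Function.Injective e) (G : Finset Γ) :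
    ∀ᶠ j in atTop, ∀ a ∈ G, ∀ b ∈ G, rr e j a = rr e j b → a = b := by
  rw [Finset.eventually_all]
  intro a _
  rw [Finset.eventually_all]
  intro b _
  by_cases h : a = b
  · exact Eventually.of_forall fun _ _ => h
  · filter_upwards [rr_sep e he a b h] with j hj hc
    exact absurd hc hj

open Classical in
noncomputable def cyl {Γ : Type*} (e : Γ → ℕ → Bool) (j : ℕ) (S : Finset (Fin j → Bool)) : Γ → Bool :=
  fun γ => decide (rr e j γ ∈ S)

open Classical in
noncomputable def ind {Γ : Type*} (G : Finset Γ) : Γ → Bool := fun γ => decide (γ ∈ G)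

open Classical in
theorem dense_cyl {Γ : Type*} (e : Γ → ℕ → Bool) (he : Function.Injective e) :
    DenseRange (fun p : (Σ j : ℕ, Finset (Fin j → Bool)) => cyl e p.1 p.2) := by
  intro x
  rw [mem_closure_iff_nhds]
  intro t ht
  rw [nhds_pi, Filter.mem_pi] at ht
  obtain ⟨I, hI, u, hu, hsub⟩ := ht
  obtain ⟨j, hj⟩ := (rr_inj e he hI.toFinset).exists
  refine ⟨cyl e j ((hI.toFinset.filter (fun γ => x γ = true)).image (rr e j)), hsub ?_, ⟨⟨j, _⟩, rfl⟩⟩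
  intro γ hγ
  have : cyl e j ((hI.toFinset.filter (fun γ => x γ = true)).image (rr e j)) γ = x γ := by
    have hγ' : γ ∈ hI.toFinset := by simpa using hγ
    unfold cyl
    rw [Bool.eq_iff_iff, decide_eq_true_iff, Finset.mem_image]
    constructor
    · rintro ⟨a, ha, hab⟩
      rw [Finset.mem_filter] at ha
      rw [← hj a ha.1 γ hγ' hab]; exact ha.2
    · intro h
      exact ⟨γ, Finset.mem_filter.2 ⟨hγ', h⟩, rfl⟩
  rw [this]
  exact mem_of_mem_nhds (hu γ)

theorem meas_eval {Γ : Type*} (t : Γ → Bool) :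
    @Measurable _ _ (BaCp (Γ → Bool)) _ (fun f : C(Γ → Bool, ℝ) => f t) := by
  apply Measurable.of_comap_le
  exact le_iSup (fun t => MeasurableSpace.comap (fun f : C(Γ → Bool, ℝ) => f t) Real.measurableSpace) t

open Classical in
theorem meas_ind {Γ : Type*} (e : Γ → ℕ → Bool) (he : Function.Injective e)
    (G : C(Γ → Bool, ℝ) → Finset Γ)
    (hG : ∀ A : Set (Finset Γ), @MeasurableSet _ (BaCp (Γ → Bool)) (G ⁻¹' A)) :
    @Measurable _ _ (BaCp (Γ → Bool)) _ (fun f : C(Γ → Bool, ℝ) => f (ind (G f))) := by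
  letI := BaCp (Γ → Bool)
  refine measurable_of_tendsto_metrizable
    (f := fun j f => f (cyl e j ((G f).image (rr e j)))) ?_ ?_
  · intro j
    letI : MeasurableSpace (Finset (Fin j → Bool)) := ⊤
    have h1 : Measurable (fun p : C(Γ → Bool, ℝ) × Finset (Fin j → Bool) => p.1 (cyl e j p.2)) :=
      measurable_from_prod_countable_left fun y => meas_eval (cyl e j y)
    have h2 : Measurable (fun f : C(Γ → Bool, ℝ) => (f, (G f).image (rr e j))) := by
      refine measurable_id.prodMk ?_
      intro s _
      exact hG ((fun F => F.image (rr e j)) ⁻¹' s)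
    exact h1.comp h2
  · rw [tendsto_pi_nhds]
    intro f
    refine (f.continuous.tendsto _).comp ?_
    rw [tendsto_pi_nhds]
    intro γ
    refine tendsto_nhds_of_eventually_eq ?_
    have : ∀ᶠ j in atTop, ∀ a ∈ G f, rr e j a = rr e j γ → a = γ := by
      rw [Finset.eventually_all]
      intro a _
      by_cases h : a = γ
      · exact Eventually.of_forall fun _ _ => h
      · filter_upwards [rr_sep e he a γ h] with j hj hc
        exact absurd hc hj
    filter_upwards [this] with j hj
    unfold cyl ind
    rw [decide_eq_decide, Finset.mem_image]
    constructor
    · rintro ⟨a, ha, hab⟩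
      rw [← hj a ha hab]; exact ha
    · intro h
      exact ⟨γ, h, rfl⟩

open Classical in
noncomputable def mix {Γ : Type*} (B : Set Γ) (x z : Γ → Bool) : Γ → Bool :=
  fun γ => if γ ∈ B then z γ else x γ

def PP {Γ : Type*} (f : C(Γ → Bool, ℝ)) (B : Set Γ) (η : ℝ) : Prop :=
  ∃ x z, η < |f x - f (mix B x z)|

theorem cont_mix {Γ : Type*} (B : Set Γ) :
    Continuous (fun p : (Γ → Bool) × (Γ → Bool) => mix B p.1 p.2) := by
  refine continuous_pi fun γ => ?_
  unfold mix
  split_ifs <;> fun_prop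

theorem meas_PP {Γ : Type*} (e : Γ → ℕ → Bool) (he : Function.Injective e) (B : Set Γ) (η : ℝ) :
    @MeasurableSet _ (BaCp (Γ → Bool)) {f | PP f B η} := by
  letI := BaCp (Γ → Bool)
  let d := (fun p : (Σ j : ℕ, Finset (Fin j → Bool)) => cyl e p.1 p.2)
  have : {f | PP f B η} = ⋃ p : (Σ j : ℕ, Finset (Fin j → Bool)), ⋃ q : (Σ j : ℕ, Finset (Fin j → Bool)),
      {f | η < |f (d p) - f (mix B (d p) (d q))|} := by
    ext f
    simp only [mem_ofPred_eq, mem_iUnion]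
    constructor
    · rintro ⟨x, z, h⟩
      have hop : IsOpen {p : (Γ → Bool) × (Γ → Bool) | η < |f p.1 - f (mix B p.1 p.2)|} := by
        refine isOpen_lt continuous_const ?_
        have := cont_mix B
        fun_prop
      obtain ⟨⟨p, q⟩, hpq⟩ := ((dense_cyl e he).prodMap (dense_cyl e he)).exists_mem_open hop ⟨(x, z), h⟩
      exact ⟨p, q, hpq⟩
    · rintro ⟨p, q, h⟩
      exact ⟨_, _, h⟩
  rw [this]
  refine MeasurableSet.iUnion fun p => MeasurableSet.iUnion fun q => ?_
  refine measurableSet_lt measurable_const ?_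
  have := ((meas_eval (d p)).sub (meas_eval (mix B (d p) (d q)))).norm
  exact this

theorem PP_iff {Γ : Type*} (e : Γ → ℕ → Bool) (he : Function.Injective e) (A : Set Γ) (ε : ℝ)
    (hε : 0 < ε) (f : C(Γ → Bool, ℝ)) :
    (∃ γ ∈ A, PP f {γ} ε) ↔ ∃ n : ℕ, ∀ j, ∃ s : Fin j → Bool,
      PP f (A ∩ {γ | rr e j γ = s}) (ε + 1 / (n + 1)) := by
  constructor
  · rintro ⟨γ, hγ, x, z, h⟩
    obtain ⟨n, hn⟩ := exists_nat_one_div_lt (sub_pos.2 h)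
    refine ⟨n, fun j => ⟨rr e j γ, x, mix {γ} x z, ?_⟩⟩
    have : mix (A ∩ {γ' | rr e j γ' = rr e j γ}) x (mix {γ} x z) = mix {γ} x z := by
      ext γ'
      unfold mix
      by_cases h' : γ' = γ
      · subst h'; simp [hγ]
      · simp [h']
    rw [this]
    linarith
  · rintro ⟨n, h⟩
    have hδ : (0:ℝ) < 1 / (n + 1) := Nat.one_div_pos_of_nat
    obtain ⟨G, hG⟩ := unif f _ hδ
    obtain ⟨j, hj⟩ := (rr_inj e he G).exists
    obtain ⟨s, x, z, h⟩ := h j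
    set C := A ∩ {γ | rr e j γ = s} with hC
    by_cases h0 : ∃ γ ∈ G, γ ∈ C
    · obtain ⟨γ, hγG, hγ⟩ := h0
      refine ⟨γ, hγ.1, x, z, ?_⟩
      have := hG (mix {γ} x z) (mix C x z) (by
        intro γ' hγ'
        unfold mix
        by_cases h' : γ' = γ
        · subst h'; simp [hγ]
        · have : γ' ∉ C := fun hc => h' (hj _ hγ' _ hγG (hc.2.trans hγ.2.symm))
          simp [h', this])
      have h3 := abs_sub_le (f x) (f (mix {γ} x z)) (f (mix C x z))
      linarith
    · push Not at h0
      have := hG x (mix C x z) (by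
        intro γ hγ
        unfold mix
        simp [h0 γ hγ])
      linarith

theorem PP_fin {Γ : Type*} (f : C(Γ → Bool, ℝ)) (ε : ℝ) (hε : 0 < ε) : {γ | PP f {γ} ε}.Finite := by
  obtain ⟨G, hG⟩ := unif f ε hε
  refine G.finite_toSet.subset ?_
  rintro γ ⟨x, z, h⟩
  by_contra hc
  have := hG x (mix {γ} x z) (by
    intro γ' hγ'
    unfold mix
    have : γ' ≠ γ := by rintro rfl; exact hc hγ'
    simp [this])
  linarith

noncomputable def EE {Γ : Type*} (k : ℕ) (f : C(Γ → Bool, ℝ)) : Finset Γ :=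
  (PP_fin f (1 / ((k:ℝ) + 1)) Nat.one_div_pos_of_nat).toFinset

theorem meas_EE {Γ : Type*} (h : Cardinal.mk Γ = Cardinal.aleph 1) (e : Γ → ℕ → Bool)
    (he : Function.Injective e) (k : ℕ) (B : Set (Finset Γ)) :
    @MeasurableSet _ (BaCp (Γ → Bool)) (EE k ⁻¹' B) := by
  letI := BaCp (Γ → Bool)
  refine hit h _ ?_ B
  intro A
  have : {f : C(Γ → Bool, ℝ) | ∃ x ∈ EE k f, x ∈ A} = ⋃ n : ℕ, ⋂ j, ⋃ s : Fin j → Bool,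
      {f | PP f (A ∩ {γ | rr e j γ = s}) (1 / ((k:ℝ) + 1) + 1 / (n + 1))} := by
    ext f
    have := PP_iff e he A (1 / ((k:ℝ) + 1)) Nat.one_div_pos_of_nat f
    simp only [mem_iUnion, mem_iInter, mem_ofPred_eq]
    rw [← this]
    simp only [EE, Finite.mem_toFinset, mem_ofPred_eq]
    exact exists_congr fun _ => and_comm
  rw [this]
  exact MeasurableSet.iUnion fun n => MeasurableSet.iInter fun j => MeasurableSet.iUnion fun s =>
    meas_PP e he _ _

theorem flips {Γ : Type*} (f : C(Γ → Bool, ℝ)) (ε : ℝ) (H : Finset Γ)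
    (hH : ∀ γ ∈ H, ¬ PP f {γ} ε) (x y : Γ → Bool) (hxy : ∀ γ, γ ∉ H → x γ = y γ) :
    |f x - f y| ≤ H.card * ε := by
  classical
  induction H using Finset.induction_on generalizing x with
  | empty =>
    have : x = y := funext fun γ => hxy γ (by simp)
    simp [this]
  | insert a H ha ih =>
    have h1 := ih (fun γ hγ => hH γ (Finset.mem_insert_of_mem hγ)) (mix {a} x y) (by
      intro γ hγ
      unfold mix
      by_cases h' : γ = a
      · simp [h']
      · simp [h', hxy γ (by simp [h', hγ])])
    have h2 : |f x - f (mix {a} x y)| ≤ ε := by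
      by_contra hc
      exact hH a (Finset.mem_insert_self _ _) ⟨x, y, not_le.1 hc⟩
    have h3 := abs_sub_le (f x) (f (mix {a} x y)) (f y)
    rw [Finset.card_insert_of_notMem ha]
    push_cast
    linarith

open Classical in
noncomputable def basisFn {Γ : Type*} (F G : Finset Γ) : C(Γ → Bool, ℝ) where
  toFun x := if (∀ γ ∈ F, x γ = ind G γ) then 1 else 0
  continuous_toFun := by
    have : IsClopen {x : Γ → Bool | ∀ γ ∈ F, x γ = ind G γ} := by
      have : {x : Γ → Bool | ∀ γ ∈ F, x γ = ind G γ} = ⋂ γ ∈ F, (fun x => x γ) ⁻¹' {ind G γ} := by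
        ext; simp
      rw [this]
      exact isClopen_biInter_finset fun γ _ => (isClopen_discrete _).preimage (continuous_apply γ)
    exact continuous_const.if (fun a ha => by
      rw [this.frontier_eq] at ha; exact absurd ha (notMem_empty _)) continuous_const

open Classical in
theorem basis_sum {Γ : Type*} (F : Finset Γ) (c : Finset Γ → ℝ) (x : Γ → Bool) :
    (∑ G ∈ F.powerset, c G • basisFn F G) x = c (F.filter fun γ => x γ = true) := by
  rw [ContinuousMap.sum_apply]
  rw [Finset.sum_eq_single (F.filter fun γ => x γ = true)]
  · have : ∀ γ ∈ F, x γ = ind (F.filter fun γ => x γ = true) γ := by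
      intro γ hγ
      simp [ind, hγ]
    simp only [ContinuousMap.smul_apply, basisFn, ContinuousMap.coe_mk]
    rw [if_pos this]; simp
  · intro G hG hne
    have : ¬ ∀ γ ∈ F, x γ = ind G γ := by
      intro hc
      apply hne
      ext γ
      rw [Finset.mem_filter]
      constructor
      · intro h
        have hF := Finset.mem_powerset.1 hG h
        exact ⟨hF, by rw [hc γ hF]; simpa [ind] using h⟩
      · rintro ⟨h1, h2⟩
        rw [hc γ h1] at h2
        simpa [ind] using h2
    simp only [ContinuousMap.smul_apply, basisFn, ContinuousMap.coe_mk]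
    rw [if_neg this]; simp
  · intro h
    exact absurd (Finset.mem_powerset.2 (Finset.filter_subset _ _)) h

/-- the approximations -/
noncomputable def TT {Γ : Type*} (k : ℕ) (f : C(Γ → Bool, ℝ)) : C(Γ → Bool, ℝ) :=
  ∑ G ∈ (EE k f).powerset, f (ind G) • basisFn (EE k f) G

theorem meas_TT {Γ : Type*} (h : Cardinal.mk Γ = Cardinal.aleph 1) (e : Γ → ℕ → Bool)
    (he : Function.Injective e) (k : ℕ) :
    @Measurable _ _ (BaCp (Γ → Bool)) (borel _) (TT (Γ := Γ) k) := by
  have : ∀ F : Finset Γ, ∃ g : ℕ → Finset Γ, (F.powerset : Set (Finset Γ)) = range g := fun F =>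
    F.powerset.countable_toSet.exists_eq_range ⟨∅, by simp⟩
  choose g hg using this
  have : ∀ F G : Finset Γ, ∃ i : ℕ, G ⊆ F → g F i = G := by
    intro F G
    by_cases hGF : G ⊆ F
    · have : G ∈ (F.powerset : Set (Finset Γ)) := by simpa using hGF
      rw [hg] at this
      obtain ⟨i, hi⟩ := this
      exact ⟨i, fun _ => hi⟩
    · exact ⟨0, fun h => absurd h hGF⟩
  choose idx hidx using this
  let α := C(Γ → Bool, ℝ)
  let mα : MeasurableSpace α := BaCp (Γ → Bool)
  let mβ : MeasurableSpace C(Γ → Bool, ℝ) := borel _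
  haveI : @BorelSpace C(Γ → Bool, ℝ) _ mβ := @BorelSpace.mk _ _ mβ rfl
  letI : MeasurableSpace (Finset Γ) := ⊤
  let u : (ℕ → ℝ) → Finset Γ → C(Γ → Bool, ℝ) := fun v F =>
    ∑ G ∈ F.powerset, v (idx F G) • basisFn F G
  have hu : @Measurable _ _ _ mβ (Function.uncurry u) := by
    refine MeasureTheory.measurable_uncurry_of_continuous_of_measurable ?_ ?_
    · intro F
      refine continuous_finsetSum _ fun G _ => ?_
      exact (continuous_apply _).smul continuous_const
    · intro v
      exact measurable_from_top
  have hE : @Measurable _ _ mα _ (EE (Γ := Γ) k) := fun s _ => meas_EE h e he k s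
  have hv : @Measurable _ _ mα _ (fun f : C(Γ → Bool, ℝ) => fun i : ℕ => f (ind (g (EE k f) i))) := by
    refine @measurable_pi_lambda _ _ _ mα _ _ fun i => ?_
    exact meas_ind e he _ fun A => meas_EE h e he k ((fun F => g F i) ⁻¹' A)
  have := @Measurable.comp _ _ _ mα _ mβ _ _ hu (Measurable.prodMk hv hE)
  convert this using 1
  ext1 f
  simp only [TT, Function.comp, Function.uncurry, u]
  refine Finset.sum_congr rfl fun G hG => ?_
  rw [hidx _ _ (Finset.mem_powerset.1 hG)]

theorem tendsto_TT {Γ : Type*} (f : C(Γ → Bool, ℝ)) :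
    Tendsto (fun k => TT k f) atTop (𝓝 f) := by
  classical
  rw [Metric.tendsto_atTop]
  intro δ hδ
  obtain ⟨G, hG⟩ := unif f (δ / 3) (by positivity)
  obtain ⟨N, hN⟩ := exists_nat_gt ((G.card : ℝ) / (δ / 3))
  refine ⟨N, fun k hk => ?_⟩
  have hbd : (G.card : ℝ) * (1 / ((k:ℝ) + 1)) ≤ δ / 3 := by
    rw [div_lt_iff₀ (by positivity)] at hN
    have : (N : ℝ) ≤ k := by exact_mod_cast hk
    rw [mul_one_div, div_le_iff₀ (by positivity)]
    nlinarith
  refine lt_of_le_of_lt ((ContinuousMap.dist_le (C := 2 * δ / 3) (by positivity)).2 fun x => ?_)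
    (by linarith)
  unfold TT
  rw [basis_sum, Real.dist_eq, abs_sub_comm]
  set y := ind ((EE k f).filter fun γ => x γ = true) with hy
  have hyF : ∀ γ ∈ EE k f, y γ = x γ := by
    intro γ hγ
    simp [hy, ind, hγ]
  have h1 := flips f (1 / ((k:ℝ) + 1)) (G \ EE k f) (by
    intro γ hγ hc
    rw [Finset.mem_sdiff] at hγ
    exact hγ.2 (by simpa [EE] using hc)) x (mix (↑(G \ EE k f)) x y) (by
    intro γ hγ
    unfold mix
    rw [if_neg (by simpa using hγ)])
  have h2 := hG (mix (↑(G \ EE k f)) x y) y (by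
    intro γ hγ
    unfold mix
    by_cases h' : γ ∈ EE k f
    · simp [h', hyF]
    · simp [h', hγ])
  have h3 : ((G \ EE k f).card : ℝ) * (1 / ((k:ℝ) + 1)) ≤ G.card * (1 / ((k:ℝ) + 1)) := by
    gcongr
    exact Finset.sdiff_subset
  have h4 := abs_sub_le (f x) (f (mix (↑(G \ EE k f)) x y)) (f y)
  linarith

/-- If `|Γ| = ℵ₁` then `Ba(C_p(2^Γ)) = Bo(C(2^Γ))`. -/
theorem stmt5 (Γ : Type*) (h : Cardinal.mk Γ = Cardinal.aleph 1) :
    BaCp (Γ → Bool) = borel C(Γ → Bool, ℝ) := by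
  apply le_antisymm
  · refine iSup_le fun t => ?_
    rw [← measurable_iff_comap_le]
    letI : MeasurableSpace C(Γ → Bool, ℝ) := borel _
    haveI : BorelSpace C(Γ → Bool, ℝ) := ⟨rfl⟩
    have hc : Continuous (fun f : C(Γ → Bool, ℝ) => f t) := by fun_prop
    exact hc.measurable
  · obtain ⟨e, he⟩ := exists_inj' h.le
    letI mβ : MeasurableSpace C(Γ → Bool, ℝ) := borel _
    haveI : BorelSpace C(Γ → Bool, ℝ) := ⟨rfl⟩
    have : @Measurable _ _ (BaCp (Γ → Bool)) mβ (id : C(Γ → Bool, ℝ) → C(Γ → Bool, ℝ)) := by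
      refine @measurable_of_tendsto_metrizable _ _ (BaCp (Γ → Bool)) _ _ mβ _ (fun k => TT k) _
        (fun k => meas_TT h e he k) ?_
      rw [tendsto_pi_nhds]
      exact fun f => tendsto_TT f
    intro s hs
    exact this hs
end

section
/- Let Γ be a set of cardinality ℵ₁. Then the Banach space C(2^Γ) is measure-compact in its weak topology: for every probability measure μ defined on the σ-algebra Ba(C(2^Γ)_w) generated by all continuous linear functionals, there exists a separable closed linear subspace X₀ of C(2^Γ) of full outer measure, μ*(X₀) = 1. -/
open MeasureTheory Filter Topology

/-- Convergence of a sequence of sets. -/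
def SConv {Γ : Type*} (S : ℕ → Set Γ) (T : Set Γ) : Prop :=
  ∀ γ, ∀ᶠ j in atTop, (γ ∈ S j ↔ γ ∈ T)

open Classical in
/-- The retraction killing coordinates off `S`. -/
noncomputable def retr {Γ : Type*} (S : Set Γ) : C(Γ → Bool, Γ → Bool) where
  toFun t γ := if γ ∈ S then t γ else false
  continuous_toFun := by
    refine continuous_pi fun γ => ?_
    by_cases h : γ ∈ S
    · simpa [h] using continuous_apply γ
    · simpa [h] using continuous_const

/-- The projection. -/
noncomputable def Pr {Γ : Type*} (S : Set Γ) : C(Γ → Bool, ℝ) →L[ℝ] C(Γ → Bool, ℝ) where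
  toFun x := x.comp (retr S)
  map_add' _ _ := rfl
  map_smul' _ _ := rfl
  cont := ContinuousMap.continuous_precomp _

theorem Pr_apply {Γ : Type*} (S : Set Γ) (x : C(Γ → Bool, ℝ)) (t : Γ → Bool) :
    Pr S x t = x (retr S t) := rfl

theorem Pr_Pr {Γ : Type*} {S T : Set Γ} (h : S ⊆ T) (x : C(Γ → Bool, ℝ)) :
    Pr T (Pr S x) = Pr S x := by
  ext t
  simp only [Pr_apply]
  congr 1
  funext γ
  by_cases h1 : γ ∈ S
  · simp [retr, h1, h h1]
  · simp [retr, h1]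

theorem Pr_Pr' {Γ : Type*} {S T : Set Γ} (h : S ⊆ T) (x : C(Γ → Bool, ℝ)) :
    Pr S (Pr T x) = Pr S x := by
  ext t
  simp only [Pr_apply]
  congr 1
  funext γ
  by_cases h1 : γ ∈ S
  · simp [retr, h1, h h1]
  · simp [retr, h1]

theorem Pr_univ {Γ : Type*} (x : C(Γ → Bool, ℝ)) : Pr Set.univ x = x := by
  ext t
  simp only [Pr_apply]
  congr 1
  funext γ
  simp [retr]

theorem Pr_norm {Γ : Type*} (S : Set Γ) (x : C(Γ → Bool, ℝ)) : ‖Pr S x‖ ≤ ‖x‖ := by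
  rw [ContinuousMap.norm_le _ (norm_nonneg _)]
  intro t
  exact x.norm_coe_le_norm _

theorem Pr_tendsto {Γ : Type*} {S : ℕ → Set Γ} {T : Set Γ} (h : SConv S T)
    (x : C(Γ → Bool, ℝ)) : Tendsto (fun j => Pr (S j) x) atTop (𝓝 (Pr T x)) := by
  rw [ContinuousMap.tendsto_iff_tendstoUniformly]
  have hx : UniformContinuous x := CompactSpace.uniformContinuous_of_continuous x.continuous
  have : TendstoUniformly (fun j => (retr (S j) : (Γ → Bool) → Γ → Bool)) (retr T) atTop := by
    rw [tendstoUniformly_iff_tendsto, Pi.uniformity, tendsto_iInf]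
    intro γ
    rw [tendsto_comap_iff]
    refine Tendsto.mono_right ?_ refl_le_uniformity
    rw [tendsto_principal]
    have h1 := (h γ).prod_inl (⊤ : Filter (Γ → Bool))
    filter_upwards [h1] with p hp
    simp only [SetRel.mem_id, retr, ContinuousMap.coe_mk, Function.comp]
    by_cases h2 : γ ∈ T
    · rw [if_pos h2, if_pos (hp.2 h2)]
    · rw [if_neg h2, if_neg (fun h3 => h2 (hp.1 h3))]
  exact hx.comp_tendstoUniformly this

section meas
variable {Y : Type*} [MeasurableSpace Y] (μ : Measure Y)

/-- Pseudo-distance to zero for convergence in measure. -/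
noncomputable def dm (f : Y → ℝ) : ℝ := ∫ x, min |f x| 1 ∂μ

theorem dm_zero : dm μ (fun _ => 0) = 0 := by simp [dm]

theorem dm_nonneg (f : Y → ℝ) : 0 ≤ dm μ f :=
  integral_nonneg fun _ => le_min (abs_nonneg _) zero_le_one

theorem dm_congr {f g : Y → ℝ} (h : f =ᵐ[μ] g) : dm μ f = dm μ g := by
  apply integral_congr_ae
  filter_upwards [h] with x hx
  simp [hx]

variable [IsProbabilityMeasure μ]

theorem dm_tendsto {f : ℕ → Y → ℝ} {g : Y → ℝ} (hf : ∀ n, Measurable (f n))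
    (h : ∀ x, Tendsto (fun n => f n x) atTop (𝓝 (g x))) :
    Tendsto (fun n => dm μ (f n)) atTop (𝓝 (dm μ g)) := by
  apply tendsto_integral_of_dominated_convergence (fun _ => (1 : ℝ))
  · intro n
    have := hf n
    exact (Measurable.min (by fun_prop) measurable_const).aestronglyMeasurable
  · exact integrable_const _
  · intro n
    refine Eventually.of_forall fun x => ?_
    rw [Real.norm_of_nonneg (le_min (abs_nonneg _) zero_le_one)]
    exact min_le_right _ _
  · exact Eventually.of_forall fun x => (h x).abs.min tendsto_const_nhds

theorem dm_eq_zero {f : Y → ℝ} (hf : Measurable f) (h : dm μ f = 0) : ∀ᵐ x ∂μ, f x = 0 := by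
  have hm : Measurable fun x => min |f x| 1 := Measurable.min (by fun_prop) measurable_const
  have hi : Integrable (fun x => min |f x| 1) μ := by
    refine Integrable.mono' (integrable_const (1 : ℝ)) hm.aestronglyMeasurable
      (Eventually.of_forall fun x => ?_)
    rw [Real.norm_of_nonneg (le_min (abs_nonneg _) zero_le_one)]
    exact min_le_right _ _
  have := (integral_eq_zero_iff_of_nonneg
    (fun _ => le_min (abs_nonneg _) zero_le_one) hi).1 h
  filter_upwards [this] with x hx
  by_contra hne
  have h1 : 0 < |f x| := abs_pos.2 hne
  have : 0 < min |f x| 1 := lt_min h1 one_pos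
  simp only [Pi.zero_apply] at hx
  linarith

end meas

theorem ulam {Γ : Type*} (h : Cardinal.mk Γ = Cardinal.aleph 1) :
    ∃ (W : ℕ → Γ → Set Γ) (C : Γ → Set Γ), (∀ α, (C α).Countable) ∧
      (∀ α β, β ∉ C α → ∀ᶠ k in atTop, β ∈ W k α) ∧
      (∀ k α β, β ∈ W k α → β ∉ C α) ∧
      (∀ k β, {α | β ∈ W k α}.Finite) := by
  obtain ⟨r, wo, hr⟩ := Cardinal.exists_ord_eq Γ
  have hc : ∀ α, {β | r β α}.Countable := by
    intro α
    have := Cardinal.card_typein_lt α hr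
    rw [h] at this
    rw [← Set.countable_coe_iff, ← Cardinal.mk_le_aleph0_iff, ← Order.lt_succ_iff,
      Cardinal.succ_aleph0]
    exact this
  choose e he using fun α => (Set.countable_iff_exists_injOn.1 (hc α))
  refine ⟨fun k α => {β | r α β ∧ e β α ≤ k}, fun α => {β | ¬ r α β}, ?_, ?_, ?_, ?_⟩
  · intro α
    refine ((hc α).union (Set.countable_singleton α)).mono ?_
    intro β hβ
    rcases trichotomous_of r α β with h | h | h
    · exact absurd h hβ
    · right; exact h.symm
    · left; exact h
  · intro α β hβ
    filter_upwards [eventually_ge_atTop (e β α)] with k hk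
    exact ⟨not_not.1 hβ, hk⟩
  · intro k α β hβ h
    exact h hβ.1
  · intro k β
    refine Set.Finite.of_finite_image (f := e β) ((Set.finite_Iic k).subset ?_) ?_
    · rintro _ ⟨α, hα, rfl⟩
      exact hα.2
    · intro a ha b hb hab
      exact he β ha.1 hb.1 hab

section main
variable {Γ : Type*} [MeasurableSpace C(Γ → Bool, ℝ)] (μ : Measure C(Γ → Bool, ℝ))
  [IsProbabilityMeasure μ]

theorem hmS (hm : ∀ φ : C(Γ → Bool, ℝ) →L[ℝ] ℝ, Measurable φ)
    (φ : C(Γ → Bool, ℝ) →L[ℝ] ℝ) (S T : Set Γ) :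
    Measurable fun x => φ (Pr S x) - φ (Pr T x) :=
  (hm (φ.comp (Pr S))).sub (hm (φ.comp (Pr T)))

theorem dm_Pr_tendsto (hm : ∀ φ : C(Γ → Bool, ℝ) →L[ℝ] ℝ, Measurable φ)
    (φ : C(Γ → Bool, ℝ) →L[ℝ] ℝ) {S : ℕ → Set Γ} {T : Set Γ}
    (h : SConv S T) (U : Set Γ) :
    Tendsto (fun j => dm μ fun x => φ (Pr (S j) x) - φ (Pr U x)) atTop
      (𝓝 (dm μ fun x => φ (Pr T x) - φ (Pr U x))) := by
  apply dm_tendsto μ (fun n => hmS hm φ _ _)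
  intro x
  exact ((φ.continuous.tendsto _).comp (Pr_tendsto h x)).sub_const _

theorem dm_self (φ : C(Γ → Bool, ℝ) →L[ℝ] ℝ) (U : Set Γ) :
    (dm μ fun x => φ (Pr U x) - φ (Pr U x)) = 0 := by
  simp only [sub_self]
  exact dm_zero μ

theorem step0 (hm : ∀ φ : C(Γ → Bool, ℝ) →L[ℝ] ℝ, Measurable φ)
    (φ : C(Γ → Bool, ℝ) →L[ℝ] ℝ) (ε : ℝ) (hε : 0 < ε) :
    ∃ A : Set Γ, A.Countable ∧ ∀ D : Set Γ, D.Countable → Disjoint D A →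
      dm μ (fun x => φ (Pr Dᶜ x) - φ (Pr Set.univ x)) ≤ ε := by
  by_contra! hcon
  choose! D hDc hDd hD using hcon
  let A : ℕ → Set Γ := fun n => Nat.rec ∅ (fun _ A => A ∪ D A) n
  have hA : ∀ n, A (n + 1) = A n ∪ D (A n) := fun _ => rfl
  have hAc : ∀ n, (A n).Countable := by
    intro n
    induction n with
    | zero => exact Set.countable_empty
    | succ n ih => rw [hA]; exact ih.union (hDc _ ih)
  have hmono : Monotone A := monotone_nat_of_le_succ fun n => by
    rw [hA]; exact Set.subset_union_left
  have hconv : SConv (fun j => (D (A j))ᶜ) Set.univ := by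
    intro γ
    by_cases hγ : ∃ j, γ ∈ D (A j)
    · obtain ⟨j, hj⟩ := hγ
      filter_upwards [eventually_ge_atTop (j + 1)] with i hi
      have : γ ∈ A i := hmono hi (by rw [hA]; exact Or.inr hj)
      simp only [Set.mem_univ, iff_true]
      intro h2
      exact Set.disjoint_left.1 (hDd _ (hAc i)) h2 this
    · push Not at hγ
      exact Eventually.of_forall fun j => by simpa using hγ j
  have := dm_Pr_tendsto μ hm φ hconv Set.univ
  rw [dm_self] at this
  obtain ⟨j, hj⟩ := (this.eventually (gt_mem_nhds hε)).exists
  exact lt_asymm hj (hD _ (hAc j))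

theorem step0' (hm : ∀ φ : C(Γ → Bool, ℝ) →L[ℝ] ℝ, Measurable φ)
    (φ : C(Γ → Bool, ℝ) →L[ℝ] ℝ) :
    ∃ A : Set Γ, A.Countable ∧ ∀ D : Set Γ, D.Countable → Disjoint D A →
      ∀ᵐ x ∂μ, φ (Pr Dᶜ x) = φ x := by
  choose A hA h using fun n : ℕ => step0 μ hm φ (1 / ((n : ℝ) + 1)) Nat.one_div_pos_of_nat
  refine ⟨⋃ n, A n, Set.countable_iUnion hA, fun D hD hdis => ?_⟩
  have h0 : dm μ (fun x => φ (Pr Dᶜ x) - φ (Pr Set.univ x)) = 0 := by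
    refine le_antisymm ?_ (dm_nonneg _ _)
    refine ge_of_tendsto' tendsto_one_div_add_atTop_nhds_zero_nat fun n => ?_
    exact h n D hD (hdis.mono_right (Set.subset_iUnion _ _))
  filter_upwards [dm_eq_zero μ (hmS hm φ _ _) h0] with x hx
  rw [Pr_univ] at hx
  linarith

theorem step1 (h : Cardinal.mk Γ = Cardinal.aleph 1)
    (hm : ∀ φ : C(Γ → Bool, ℝ) →L[ℝ] ℝ, Measurable φ)
    (φ : C(Γ → Bool, ℝ) →L[ℝ] ℝ) :
    ∃ A : Set Γ, A.Countable ∧ ∀ B : Set Γ, A ⊆ B → ∀ᵐ x ∂μ, φ (Pr B x) = φ x := by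
  obtain ⟨A, hAc, hA⟩ := step0' μ hm φ
  obtain ⟨W, C, hC, hW1, hW2, hW3⟩ := ulam h
  refine ⟨A, hAc, fun B hB => ?_⟩
  have key : dm μ (fun x => φ (Pr Set.univ x) - φ (Pr B x)) = 0 := by
    by_contra hne
    set δ := dm μ (fun x => φ (Pr Set.univ x) - φ (Pr B x)) with hδ
    have hpos : 0 < δ := lt_of_le_of_ne (dm_nonneg _ _) (Ne.symm hne)
    have hk : ∀ α, ∃ k, δ / 2 < dm μ (fun x => φ (Pr (B ∪ W k α) x) - φ (Pr B x)) := by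
      intro α
      have hconv : SConv (fun k => B ∪ W k α) (C α \ B)ᶜ := by
        intro γ
        by_cases hγ : γ ∈ B
        · exact Eventually.of_forall fun k => by simp [hγ]
        · by_cases hγC : γ ∈ C α
          · refine Eventually.of_forall fun k => ?_
            have : γ ∉ W k α := fun hh => hW2 k α γ hh hγC
            simp [hγ, hγC, this]
          · filter_upwards [hW1 α γ hγC] with k hk
            simp [hγC, hk]
      have ht := dm_Pr_tendsto μ hm φ hconv B
      have he : dm μ (fun x => φ (Pr (C α \ B)ᶜ x) - φ (Pr B x)) = δ := by
        apply dm_congr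
        filter_upwards [hA (C α \ B) ((hC α).mono Set.sdiff_subset)
          (Set.disjoint_left.2 fun a ha ha' => ha.2 (hB ha'))] with x hx
        rw [hx, Pr_univ]
      rw [he] at ht
      exact (ht.eventually (lt_mem_nhds (half_lt_self hpos))).exists
    choose k hk using hk
    have hinf : ∃ n, (k ⁻¹' {n}).Infinite := by
      by_contra! hfin
      have hu : (Set.univ : Set Γ).Countable := by
        have : (Set.univ : Set Γ) = ⋃ n, k ⁻¹' {n} := by ext; simp
        rw [this]
        exact Set.countable_iUnion fun n => (hfin n).countable
      rw [Set.countable_univ_iff, ← Cardinal.mk_le_aleph0_iff, h] at hu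
      exact absurd hu (not_le.2 Cardinal.aleph0_lt_aleph_one)
    obtain ⟨n, hn⟩ := hinf
    let a := hn.natEmbedding
    have hconv : SConv (fun j => B ∪ W n (a j)) B := by
      intro γ
      have hf : {j | γ ∈ W n (a j)}.Finite :=
        Set.Finite.preimage (f := fun j => (a j : Γ))
          (Subtype.val_injective.comp a.injective).injOn (hW3 n γ)
      have := hf.eventually_cofinite_notMem
      rw [Nat.cofinite_eq_atTop] at this
      filter_upwards [this] with j hj
      have hj' : γ ∉ W n (a j) := hj
      simp [hj']
    have ht := dm_Pr_tendsto μ hm φ hconv B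
    rw [dm_self] at ht
    obtain ⟨j, hj⟩ := (ht.eventually (gt_mem_nhds (half_pos hpos))).exists
    have h2 := hk (a j)
    have h3 : k (a j) = n := (a j).2
    rw [h3] at h2
    exact lt_asymm hj h2
  filter_upwards [dm_eq_zero μ (hmS hm φ _ _) key] with x hx
  rw [Pr_univ] at hx
  linarith

theorem step2 (h : Cardinal.mk Γ = Cardinal.aleph 1)
    (hm : ∀ φ : C(Γ → Bool, ℝ) →L[ℝ] ℝ, Measurable φ) (ε : ℝ) (hε : 0 < ε) :
    ∃ A : Set Γ, A.Countable ∧ ∀ φ : C(Γ → Bool, ℝ) →L[ℝ] ℝ, ‖φ‖ ≤ 1 →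
      dm μ (fun x => φ (Pr Set.univ x) - φ (Pr A x)) ≤ ε := by
  by_contra! hcon
  choose! φ hφ hd using hcon
  choose B hBc hB using step1 μ h hm
  let A : ℕ → Set Γ := fun n => Nat.rec ∅ (fun _ A => A ∪ B (φ A)) n
  have hA : ∀ n, A (n + 1) = A n ∪ B (φ (A n)) := fun _ => rfl
  have hAc : ∀ n, (A n).Countable := by
    intro n
    induction n with
    | zero => exact Set.countable_empty
    | succ n ih => rw [hA]; exact ih.union (hBc _)
  have hmono : Monotone A := monotone_nat_of_le_succ fun n => by
    rw [hA]; exact Set.subset_union_left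
  have hconv : SConv A (⋃ n, A n) := by
    intro γ
    by_cases hγ : γ ∈ ⋃ n, A n
    · obtain ⟨n, hn⟩ := Set.mem_iUnion.1 hγ
      filter_upwards [eventually_ge_atTop n] with i hi
      exact iff_of_true (hmono hi hn) hγ
    · exact Eventually.of_forall fun j => iff_of_false
        (fun hj => hγ (Set.mem_iUnion.2 ⟨j, hj⟩)) hγ
  have ht : Tendsto (fun n => dm μ fun x =>
      φ (A n) (Pr (A (n + 1)) x) - φ (A n) (Pr (A n) x)) atTop (𝓝 (dm μ fun _ => 0)) := by
    apply dm_tendsto μ (fun n => hmS hm _ _ _)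
    intro x
    have h1 := Pr_tendsto hconv x
    have h2 := (((tendsto_add_atTop_iff_nat 1).2 h1).sub h1).norm
    rw [sub_self, norm_zero] at h2
    refine squeeze_zero_norm (fun n => ?_) h2
    rw [← map_sub]
    refine (ContinuousLinearMap.le_opNorm _ _).trans ?_
    exact mul_le_of_le_one_left (norm_nonneg _) (hφ _ (hAc n))
  rw [dm_zero] at ht
  obtain ⟨n, hn⟩ := (ht.eventually (gt_mem_nhds hε)).exists
  refine lt_asymm hn ((hd _ (hAc n)).trans_eq ?_)
  apply dm_congr
  filter_upwards [hB (φ (A n)) (A (n + 1)) (by rw [hA]; exact Set.subset_union_right)] with x hx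
  rw [hx, Pr_univ]

theorem step3 (h : Cardinal.mk Γ = Cardinal.aleph 1)
    (hm : ∀ φ : C(Γ → Bool, ℝ) →L[ℝ] ℝ, Measurable φ) :
    ∃ A : Set Γ, A.Countable ∧ ∀ φ : C(Γ → Bool, ℝ) →L[ℝ] ℝ,
      ∀ᵐ x ∂μ, φ (Pr A x) = φ x := by
  choose A hA h using fun n : ℕ => step2 μ h hm (1 / ((n : ℝ) + 1)) Nat.one_div_pos_of_nat
  refine ⟨⋃ n, A n, Set.countable_iUnion hA, fun φ => ?_⟩
  set B := ⋃ n, A n with hB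
  let χ := φ - φ.comp (Pr B)
  let c := (‖χ‖ + 1)⁻¹
  have hc : 0 < c := by positivity
  have hn : ‖c • χ‖ ≤ 1 := by
    refine ContinuousLinearMap.opNorm_le_bound _ zero_le_one fun x => ?_
    have h1 : (c • χ) x = c * χ x := rfl
    rw [h1, norm_mul, Real.norm_of_nonneg hc.le, inv_mul_le_iff₀ (by positivity)]
    have h2 := χ.le_opNorm x
    nlinarith [norm_nonneg x]
  have h0 : dm μ (c • χ : C(Γ → Bool, ℝ) →L[ℝ] ℝ) = 0 := by
    refine le_antisymm ?_ (dm_nonneg _ _)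
    refine ge_of_tendsto' tendsto_one_div_add_atTop_nhds_zero_nat fun n => ?_
    refine le_trans (le_of_eq ?_) (h n _ hn)
    congr 1
    funext x
    simp [χ, Pr_univ, Pr_Pr (Set.subset_iUnion A n), hB]
  filter_upwards [dm_eq_zero μ (hm _) h0] with x hx
  have : c * (φ x - φ (Pr B x)) = 0 := hx
  rcases mul_eq_zero.1 this with h | h
  · exact absurd h hc.ne'
  · linarith

end main

theorem fixed_separable {Γ : Type*} {A : Set Γ} (hA : A.Countable) :
    TopologicalSpace.IsSeparable
      {x : C(Γ → Bool, ℝ) | Pr A x = x} := by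
  classical
  have : Countable A := hA
  let ρ : C(Γ → Bool, A → Bool) := ⟨fun t a => t a, by fun_prop⟩
  let ι : C(A → Bool, Γ → Bool) := ⟨fun s γ => if hγ : γ ∈ A then s ⟨γ, hγ⟩ else false, by
    refine continuous_pi fun γ => ?_
    by_cases h : γ ∈ A
    · simpa [h] using continuous_apply _
    · simpa [h] using continuous_const⟩
  have hs := TopologicalSpace.isSeparable_range
    (f := fun y : C(A → Bool, ℝ) => y.comp ρ) (ContinuousMap.continuous_precomp _)
  refine hs.mono ?_
  intro x hx
  refine ⟨x.comp ι, ?_⟩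
  rw [← show Pr A x = x from hx]
  ext t
  simp only [Pr_apply, ContinuousMap.comp_apply]
  congr 1
  funext γ
  by_cases h : γ ∈ A
  · simp [retr, ι, ρ, h]
  · simp [retr, ι, ρ, h]

theorem full_aux {Γ : Type*} {m : MeasurableSpace C(Γ → Bool, ℝ)}
    (hmB : m ≤ BaW C(Γ → Bool, ℝ)) (μ : Measure C(Γ → Bool, ℝ)) (A : Set Γ)
    (hA : ∀ φ : C(Γ → Bool, ℝ) →L[ℝ] ℝ, ∀ᵐ x ∂μ, φ (Pr A x) = φ x)
    (B : Set C(Γ → Bool, ℝ)) (hB : MeasurableSet B) :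
    ∀ᵐ x ∂μ, (Pr A x ∈ B ↔ x ∈ B) := by
  let m' : MeasurableSpace C(Γ → Bool, ℝ) :=
    { MeasurableSet' := fun B => ∀ᵐ x ∂μ, (Pr A x ∈ B ↔ x ∈ B)
      measurableSet_empty := by simp
      measurableSet_compl := fun s hs => by
        filter_upwards [hs] with x hx
        simp [hx]
      measurableSet_iUnion := fun f hf => by
        filter_upwards [ae_all_iff.2 hf] with x hx
        simp [hx] }
  have hle : BaW C(Γ → Bool, ℝ) ≤ m' := by
    refine iSup_le fun φ => ?_
    rintro _ ⟨s, -, rfl⟩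
    change ∀ᵐ x ∂μ, _
    filter_upwards [hA φ] with x hx
    simp [hx]
  exact hle _ (hmB _ hB)

theorem full_outer {Γ : Type*} {m : MeasurableSpace C(Γ → Bool, ℝ)}
    (hmB : m ≤ BaW C(Γ → Bool, ℝ)) (μ : Measure C(Γ → Bool, ℝ))
    [IsProbabilityMeasure μ] (A : Set Γ)
    (hA : ∀ φ : C(Γ → Bool, ℝ) →L[ℝ] ℝ, ∀ᵐ x ∂μ, φ (Pr A x) = φ x) :
    μ {x | Pr A x = x} = 1 := by
  rw [← measure_toMeasurable, ← prob_compl_eq_zero_iff (measurableSet_toMeasurable _ _)]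
  have : ∀ᵐ x ∂μ, (Pr A x ∈ toMeasurable μ {x | Pr A x = x} ↔
      x ∈ toMeasurable μ {x | Pr A x = x}) :=
    full_aux hmB μ A hA _ (measurableSet_toMeasurable _ _)
  refine mem_ae_iff.1 ?_
  filter_upwards [this] with x hx
  exact hx.1 (subset_toMeasurable _ _ (Pr_Pr subset_rfl x))

/-- If `|Γ| = ℵ₁`, then `C(2^Γ)` is measure-compact in its weak topology: every
probability measure on `Ba(C(2^Γ)_w)` gives full outer measure to some separable closed
linear subspace. -/
theorem stmt6 (Γ : Type*) (h : Cardinal.mk Γ = Cardinal.aleph 1)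
    (μ : @MeasureTheory.Measure C(Γ → Bool, ℝ) (BaW C(Γ → Bool, ℝ)))
    (hμ : @MeasureTheory.IsProbabilityMeasure _ (BaW C(Γ → Bool, ℝ)) μ) :
    ∃ X₀ : Submodule ℝ C(Γ → Bool, ℝ),
      IsClosed (X₀ : Set C(Γ → Bool, ℝ)) ∧
      TopologicalSpace.IsSeparable (X₀ : Set C(Γ → Bool, ℝ)) ∧
      μ (X₀ : Set C(Γ → Bool, ℝ)) = 1 := by
  letI : MeasurableSpace C(Γ → Bool, ℝ) := BaW C(Γ → Bool, ℝ)
  have hm : ∀ φ : C(Γ → Bool, ℝ) →L[ℝ] ℝ, Measurable φ := fun φ =>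
    Measurable.of_comap_le (le_iSup
      (fun φ : C(Γ → Bool, ℝ) →L[ℝ] ℝ => MeasurableSpace.comap φ Real.measurableSpace) φ)
  obtain ⟨A, hAc, hA⟩ := step3 μ h hm
  let X₀ : Submodule ℝ C(Γ → Bool, ℝ) :=
    LinearMap.eqLocus (Pr A).toLinearMap LinearMap.id
  have hX : (X₀ : Set C(Γ → Bool, ℝ)) = {x | Pr A x = x} := rfl
  refine ⟨X₀, ?_, ?_, ?_⟩
  · rw [hX]
    exact isClosed_eq (Pr A).continuous continuous_id
  · rw [hX]
    exact fixed_separable hAc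
  · rw [hX]
    exact full_outer le_rfl μ A hA
end
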